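/- arXiv:2310.10105 — 3 statements merged into one kernel-verified Lean document; each statement's English description precedes it below -/
import Mathlib

section
/- Let m ∈ ℕ, β ∈ ℕ₀ with β ≤ m−1, let q, r ∈ [1,∞] (with the convention 1/∞ = 0), and let p ∈ (1,∞). Suppose the number θ determined by the relation β − 1/r = θ(m − 1/p) − (1−θ)(1/q) satisfies θ ∈ [β/m, 1). Then there exists a constant C = C(β,p,q,r,m) > 0 such that every function h of class C^m on the circle S¹ = ℝ/ℤ satisfies |h|_{β,r} ≤ C · |h|_{m,p}^θ · |h|_q^{1−θ}. -/
open MeasureTheory Real Set Filter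
open scoped ENNReal Topology

noncomputable section

namespace BurgersTurb

/-- Lebesgue measure on one period `(0,1]`, representing the circle `S¹ = ℝ/ℤ`. -/
def μ₀ : Measure ℝ := volume.restrict (Set.Ioc (0:ℝ) 1)

/-- The `L_p(S¹)` norm (`p = ∞` gives the essential supremum) of a `1`-periodic
function, computed over one period. -/
def lpNorm (p : ℝ≥0∞) (f : ℝ → ℝ) : ℝ := (eLpNorm f p μ₀).toReal

/-- The norm `|h|_{k,p} = |∂^k h|_p + |h|_p`. -/
def normKP (k : ℕ) (p : ℝ≥0∞) (h : ℝ → ℝ) : ℝ :=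
  lpNorm p (iteratedDeriv k h) + lpNorm p h

theorem W (k : ℕ) : ∃ C : ℝ, 0 ≤ C ∧ ∀ f : ℝ → ℝ, ContDiff ℝ k f → ∀ a l : ℝ, 0 < l →
    ∃ ξ ∈ Icc a (a+l), l^(k+1) * |iteratedDeriv k f ξ| ≤ C * ∫ x in a..(a+l), |f x| := by
  induction k with
  | zero =>
    refine ⟨1, by norm_num, fun f hf a l hl => ?_⟩
    have hc : Continuous f := hf.continuous
    obtain ⟨x, hx, hmin⟩ := isCompact_Icc.exists_isMinOn (nonempty_Icc.2 (by linarith : a ≤ a + l))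
      (hc.abs.continuousOn (s := Icc a (a+l)))
    refine ⟨x, hx, ?_⟩
    have := intervalIntegral.integral_mono_on (μ := volume) (by linarith : a ≤ a + l) (f := fun _ => |f x|) (g := fun y => |f y|)
      (by simp) (hc.abs.intervalIntegrable _ _) (fun y hy => hmin hy)
    simpa using this
  | succ k ih =>
    obtain ⟨C, hC, H⟩ := ih
    refine ⟨6 * 3^(k+1) * C, by positivity, fun f hf a l hl => ?_⟩
    have hfk : ContDiff ℝ k f := hf.of_le (by exact_mod_cast Nat.le_succ k)
    have hc : Continuous f := hf.continuous
    obtain ⟨x, hx, hx'⟩ := H f hfk a (l/3) (by positivity)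
    obtain ⟨y, hy, hy'⟩ := H f hfk (a + 2*l/3) (l/3) (by positivity)
    have hI : ∀ u v : ℝ, a ≤ u → u ≤ v → v ≤ a + l → ∫ x in u..v, |f x| ≤ ∫ x in a..(a+l), |f x| := by
      intro u v h1 h2 h3
      exact intervalIntegral.integral_mono_interval h1 h2 h3 (ae_of_all _ fun x => abs_nonneg _) (hc.abs.intervalIntegrable _ _)
    have h1 := hI a (a + l/3) le_rfl (by linarith) (by linarith)
    have h2 := hI (a+2*l/3) (a +2*l/3+ l/3) (by linarith) (by linarith) (by linarith)
    have hd : Differentiable ℝ (iteratedDeriv k f) := hf.differentiable_iteratedDeriv k (by exact_mod_cast Nat.lt_succ_self k)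
    have hxy : l/3 ≤ y - x := by linarith [hx.2, hy.1]
    obtain ⟨c, hc1, hc2⟩ := exists_deriv_eq_slope (iteratedDeriv k f) (by linarith : x < y) hd.continuous.continuousOn hd.differentiableOn
    refine ⟨c, ⟨by linarith [hx.1, hc1.1], by linarith [hy.2, hc1.2]⟩, ?_⟩
    rw [iteratedDeriv_succ, hc2, abs_div, abs_of_pos (by linarith : 0 < y - x)]
    set J := ∫ x in a..(a+l), |f x|
    set A := iteratedDeriv k f x
    set B := iteratedDeriv k f y
    have hA : l^(k+1) * |A| ≤ 3^(k+1) * (C * J) := by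
      rw [div_pow, div_mul_eq_mul_div, div_le_iff₀ (by positivity)] at hx'
      nlinarith [mul_le_mul_of_nonneg_left h1 hC, pow_pos (by norm_num : (0:ℝ)<3) (k+1)]
    have hB : l^(k+1) * |B| ≤ 3^(k+1) * (C * J) := by
      rw [div_pow, div_mul_eq_mul_div, div_le_iff₀ (by positivity)] at hy'
      nlinarith [mul_le_mul_of_nonneg_left h2 hC, pow_pos (by norm_num : (0:ℝ)<3) (k+1)]
    have hAB : |B - A| ≤ |B| + |A| := abs_sub _ _
    have hl1 : l / (y - x) ≤ 3 := by rw [div_le_iff₀ (by linarith)]; linarith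
    calc l^(k+1+1) * (|B - A| / (y-x)) = (l / (y-x)) * (l^(k+1) * |B - A|) := by ring
      _ ≤ 3 * (l^(k+1) * (|B| + |A|)) := by gcongr
      _ ≤ _ := by linarith

theorem Lj (j : ℕ) : ∀ γ : ℕ, ∃ C : ℝ, 0 ≤ C ∧ ∀ f : ℝ → ℝ, ContDiff ℝ (γ+j+1 : ℕ) f → ∀ a l : ℝ, 0 < l →
    ∀ x ∈ Icc a (a+l), l^(γ+1) * |iteratedDeriv γ f x| ≤
      C * (l^(γ+j+1) * (∫ x in a..(a+l), |iteratedDeriv (γ+j+1) f x|) + ∫ x in a..(a+l), |f x|) := by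
  have key : ∀ (f : ℝ → ℝ) (γ : ℕ), ContDiff ℝ (γ+1 : ℕ) f → ∀ a l : ℝ, 0 < l → ∀ x ∈ Icc a (a+l), ∀ y ∈ Icc a (a+l),
      |iteratedDeriv γ f x| ≤ |iteratedDeriv γ f y| + ∫ x in a..(a+l), |iteratedDeriv (γ+1) f x| := by
    intro f γ hf a l hl x hx y hy
    have hd : Differentiable ℝ (iteratedDeriv γ f) := hf.differentiable_iteratedDeriv γ (by exact_mod_cast Nat.lt_succ_self γ)
    have hc : Continuous (iteratedDeriv (γ+1) f) := hf.continuous_iteratedDeriv (γ+1) (by exact_mod_cast le_rfl)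
    have h1 : ∀ u v : ℝ, u ∈ Icc a (a+l) → v ∈ Icc a (a+l) → u ≤ v → |iteratedDeriv γ f v - iteratedDeriv γ f u| ≤ ∫ x in a..(a+l), |iteratedDeriv (γ+1) f x| := by
      intro u v hu hv huv
      rw [← intervalIntegral.integral_deriv_eq_sub (fun x _ => hd x) (by rw [← iteratedDeriv_succ]; exact hc.intervalIntegrable _ _), ← iteratedDeriv_succ]
      refine (intervalIntegral.abs_integral_le_integral_abs huv).trans ?_
      exact intervalIntegral.integral_mono_interval hu.1 huv hv.2 (ae_of_all _ fun x => abs_nonneg _) (hc.abs.intervalIntegrable _ _)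
    have h2 : |iteratedDeriv γ f x - iteratedDeriv γ f y| ≤ ∫ x in a..(a+l), |iteratedDeriv (γ+1) f x| := by
      rcases le_total x y with h | h
      · rw [abs_sub_comm]; exact h1 x y hx hy h
      · exact h1 y x hy hx h
    have := abs_sub_abs_le_abs_sub (iteratedDeriv γ f x) (iteratedDeriv γ f y)
    linarith
  induction j with
  | zero =>
    intro γ
    obtain ⟨C, hC, H⟩ := W γ
    refine ⟨C+1, by positivity, fun f hf a l hl x hx => ?_⟩
    obtain ⟨ξ, hξ, h⟩ := H f (hf.of_le (by exact_mod_cast Nat.le_succ γ)) a l hl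
    have h2 := key f γ hf a l hl x hx ξ hξ
    have hn1 : 0 ≤ ∫ x in a..(a+l), |f x| := intervalIntegral.integral_nonneg (by linarith) (fun _ _ => abs_nonneg _)
    have hn2 : 0 ≤ ∫ x in a..(a+l), |iteratedDeriv (γ+1) f x| := intervalIntegral.integral_nonneg (by linarith) (fun _ _ => abs_nonneg _)
    have := mul_le_mul_of_nonneg_left h2 (by positivity : 0 ≤ l^(γ+1))
    have h3 : 0 ≤ l^(γ+1) * ∫ x in a..(a+l), |iteratedDeriv (γ+1) f x| := by positivity
    simp only [add_zero]
    nlinarith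
  | succ j ih =>
    intro γ
    obtain ⟨C, hC, H⟩ := W γ
    obtain ⟨D, hD, K⟩ := ih (γ+1)
    refine ⟨C+D, by positivity, fun f hf a l hl x hx => ?_⟩
    have e : γ + 1 + j + 1 = γ + (j+1) + 1 := by ring
    rw [e] at K
    have K' := K f hf a l hl
    have hfγ : ContDiff ℝ (γ+1:ℕ) f := (hf.of_le (by exact_mod_cast (by omega)))
    obtain ⟨ξ, hξ, h⟩ := H f (hfγ.of_le (by exact_mod_cast (by omega))) a l hl
    have h2 := key f γ hfγ a l hl x hx ξ hξ
    have hn1 : 0 ≤ ∫ x in a..(a+l), |f x| := intervalIntegral.integral_nonneg (by linarith) (fun _ _ => abs_nonneg _)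
    have hn2 : 0 ≤ ∫ x in a..(a+l), |iteratedDeriv (γ+(j+1)+1) f x| := intervalIntegral.integral_nonneg (by linarith) (fun _ _ => abs_nonneg _)
    have hc : Continuous (iteratedDeriv (γ+1) f) := hfγ.continuous_iteratedDeriv (γ+1) (by exact_mod_cast le_rfl)
    set R := (l^(γ+(j+1)+1) * (∫ x in a..(a+l), |iteratedDeriv (γ+(j+1)+1) f x|) + ∫ x in a..(a+l), |f x|)
    have h4 : l^(γ+1) * ∫ x in a..(a+l), |iteratedDeriv (γ+1) f x| ≤ D * R := by
      have := intervalIntegral.integral_mono_on (μ := volume) (by linarith : a ≤ a + l) (g := fun _ => D * R / l^(γ+2)) (f := fun y => |iteratedDeriv (γ+1) f y|)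
        (hc.abs.intervalIntegrable _ _) (by simp) (fun y hy => by
          rw [le_div_iff₀ (by positivity)]
          have := K' y hy
          linarith)
      simp only [intervalIntegral.integral_const, smul_eq_mul, add_sub_cancel_left] at this
      calc _ ≤ l^(γ+1) * (l * (D * R / l^(γ+2))) := by gcongr
        _ = D * R := by field_simp; ring
    have := mul_le_mul_of_nonneg_left h2 (by positivity : 0 ≤ l^(γ+1))
    have h5 : (∫ x in a..(a+l), |f x|) ≤ R := by
      have : 0 ≤ l^(γ+(j+1)+1) * (∫ x in a..(a+l), |iteratedDeriv (γ+(j+1)+1) f x|) := by positivity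
      simp only [R]; linarith
    nlinarith [mul_le_mul_of_nonneg_left h5 hC]

theorem superadd {a b : ℝ} (ha : 0 ≤ a) (hb : 0 ≤ b) (hab : 1 ≤ a + b) {X x Y y : ℝ} (hX : 0 ≤ X) (hx : 0 ≤ x)
   (hY : 0 ≤ Y) (hy : 0 ≤ y) : X^a*Y^b + x^a*y^b ≤ (X+x)^a*(Y+y)^b := by
  have s0 : 0 < a + b := by linarith
  have key : ∀ u v : ℝ, 0 ≤ u → 0 ≤ v → u ≤ 1 → v ≤ 1 → u^a*v^b ≤ (a*u+b*v)/(a+b) := by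
    intro u v hu hv hu1 hv1
    have h := Real.geom_mean_le_arith_mean2_weighted (w₁ := a/(a+b)) (w₂ := b/(a+b)) (by positivity) (by positivity) hu hv (by field_simp)
    have h' := Real.rpow_le_rpow (by positivity) h s0.le
    rw [Real.mul_rpow (by positivity) (by positivity), ← Real.rpow_mul hu, ← Real.rpow_mul hv, div_mul_cancel₀ _ s0.ne', div_mul_cancel₀ _ s0.ne'] at h'
    have e : a/(a+b)*u + b/(a+b)*v = (a*u+b*v)/(a+b) := by ring
    rw [e] at h'
    refine h'.trans (Real.rpow_le_self_of_le_one (by positivity) ?_ hab)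
    rw [div_le_one s0]
    nlinarith
  rcases hX.eq_or_lt with h0 | h0
  · subst h0
    rcases ha.eq_or_lt with h1 | h1
    · subst h1
      simp only [Real.rpow_zero, one_mul]
      exact Real.add_rpow_le_rpow_add hY hy (by linarith)
    · rw [Real.zero_rpow h1.ne']
      simp only [zero_mul, zero_add]
      gcongr
      linarith
  rcases hY.eq_or_lt with h2 | h2
  · subst h2
    rcases hb.eq_or_lt with h1 | h1
    · subst h1
      simp only [Real.rpow_zero, mul_one]
      exact Real.add_rpow_le_rpow_add hX hx (by linarith)
    · rw [Real.zero_rpow h1.ne']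
      simp only [mul_zero, zero_add]
      gcongr
      linarith
  have hXx : 0 < X + x := by linarith
  have hYy : 0 < Y + y := by linarith
  have k1 := key (X/(X+x)) (Y/(Y+y)) (by positivity) (by positivity) (by rw [div_le_one hXx]; linarith) (by rw [div_le_one hYy]; linarith)
  have k2 := key (x/(X+x)) (y/(Y+y)) (by positivity) (by positivity) (by rw [div_le_one hXx]; linarith) (by rw [div_le_one hYy]; linarith)
  have e : (a*(X/(X+x))+b*(Y/(Y+y)))/(a+b) + (a*(x/(X+x))+b*(y/(Y+y)))/(a+b) = 1 := by field_simp; ring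
  rw [Real.div_rpow hX hXx.le, Real.div_rpow hY hYy.le] at k1
  rw [Real.div_rpow hx hXx.le, Real.div_rpow hy hYy.le] at k2
  have hp : 0 < (X+x)^a*(Y+y)^b := by positivity
  have : (X^a*Y^b + x^a*y^b) / ((X+x)^a*(Y+y)^b) ≤ 1 := by
    calc _ = X^a/(X+x)^a*(Y^b/(Y+y)^b) + x^a/(X+x)^a*(y^b/(Y+y)^b) := by field_simp
      _ ≤ 1 := by linarith
  rwa [div_le_one hp] at this

/-- Balanced interval selection. -/
theorem stepL (G y : ℝ → ℝ) (hG : Continuous G) (hy : Continuous y)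
    (M κ P σ1 σ2 : ℝ) (hκ : 0 ≤ κ) (hP : 0 < P)
    (E : ∀ t, M * (∫ x in t..t+1, y x)^κ ≤ (∫ x in t..t+1, G x)^P)
    (δ : ℝ) (hδ : 0 < δ) (hδ1 : δ ≤ 1) (t : ℝ) :
    ∃ l, δ ≤ l ∧ l ≤ 1 ∧
      ((l = δ ∧ l^σ2 * (M * (∫ x in t..t+l, y x)^κ) ≤ l^σ1 * (∫ x in t..t+l, G x)^P) ∨
        l^σ2 * (M * (∫ x in t..t+l, y x)^κ) = l^σ1 * (∫ x in t..t+l, G x)^P) := by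
  by_cases h : δ^σ2 * (M * (∫ x in t..t+δ, y x)^κ) ≤ δ^σ1 * (∫ x in t..t+δ, G x)^P
  · exact ⟨δ, le_rfl, hδ1, Or.inl ⟨rfl, h⟩⟩
  · push Not at h
    have hcI : ∀ g : ℝ → ℝ, Continuous g → Continuous fun l => ∫ x in t..t+l, g x := by
      intro g hg
      exact (intervalIntegral.continuous_primitive (fun a b => hg.intervalIntegrable a b) t).comp
        (continuous_const.add continuous_id)
    have hpow : ∀ σ : ℝ, ContinuousOn (fun l : ℝ => l^σ) (Icc δ 1) := fun σ =>
      continuousOn_id.rpow_const (fun x hx => Or.inl (by simp only [id]; linarith [hx.1]))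
    have hc : ContinuousOn (fun l : ℝ => l^σ1 * (∫ x in t..t+l, G x)^P -
        l^σ2 * (M * (∫ x in t..t+l, y x)^κ)) (Icc δ 1) := by
      refine ((hpow σ1).mul ?_).sub ((hpow σ2).mul (continuousOn_const.mul ?_))
      · exact ((hcI G hG).rpow_const (fun _ => Or.inr hP.le)).continuousOn
      · exact ((hcI y hy).rpow_const (fun _ => Or.inr hκ)).continuousOn
    have := intermediate_value_Icc hδ1 hc
    obtain ⟨l, hl, hl'⟩ := this (show (0:ℝ) ∈ _ by
      constructor
      · linarith
      · simp only [one_rpow, one_mul]; linarith [E t])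
    exact ⟨l, hl.1, hl.2, Or.inr (by simp only at hl'; linarith)⟩

theorem balanced {θ σ1 σ2 ρ A B l : ℝ} (hA : 0 ≤ A) (hB : 0 ≤ B) (hl : 0 < l) (hl1 : l ≤ 1)
    (h0 : 0 ≤ θ) (h1 : θ < 1)
    (hexp : 0 ≤ θ * σ1 + (1-θ)*σ2 + ρ) (h : l^σ2 * B = l^σ1 * A) :
    l^σ1 * A + l^σ2 * B ≤ 2 * (l^(-ρ) * (A^θ * B^(1-θ))) := by
  have hb : 0 ≤ l^σ1 * A := by positivity
  have e : l^σ1 * A = (l^σ1 * A)^θ * (l^σ2 * B)^(1-θ) := by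
    rw [h, ← Real.rpow_add_of_nonneg hb h0 (by linarith)]
    simp
  have e2 : (l^σ1 * A)^θ * (l^σ2 * B)^(1-θ) = l^(θ * σ1 + (1-θ)*σ2) * (A^θ * B^(1-θ)) := by
    rw [Real.mul_rpow (by positivity) hA, Real.mul_rpow (by positivity) hB, ← Real.rpow_mul hl.le,
      ← Real.rpow_mul hl.le, Real.rpow_add hl, mul_comm θ σ1, mul_comm (1-θ) σ2]
    ring
  have : l^(θ * σ1 + (1-θ)*σ2) ≤ l^(-ρ) := Real.rpow_le_rpow_of_exponent_ge hl hl1 (by linarith)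
  have h3 : l^σ1 * A ≤ l^(-ρ) * (A^θ * B^(1-θ)) := by
    rw [e, e2]; gcongr
  linarith

theorem core_top (u G y : ℝ → ℝ) (hG : Continuous G) (hy : Continuous y)
    (hG0 : ∀ x, 0 ≤ G x) (hy0 : ∀ x, 0 ≤ y x) (hGp : Function.Periodic G 1) (hyp : Function.Periodic y 1)
    (M κ P σ1 σ2 C θ : ℝ) (hM : 0 ≤ M) (hκ : 0 ≤ κ) (hP : 0 < P) (hσ : 0 < σ1) (hC : 0 ≤ C)
    (E : ∀ t, M * (∫ x in t..t+1, y x)^κ ≤ (∫ x in t..t+1, G x)^P)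
    (H : ∀ t l, 0 < l → l ≤ 1 → ∀ x ∈ Icc t (t+l),
      u x ≤ C * (l^σ1 * (∫ x in t..t+l, G x)^P + l^σ2 * (M * (∫ x in t..t+l, y x)^κ)))
    (h0 : 0 ≤ θ) (h1 : θ < 1) (hexp : 0 ≤ θ * σ1 + (1-θ)*σ2) (x : ℝ) :
    u x ≤ C * (2 * (((∫ x in (0:ℝ)..1, G x)^P)^θ * (M * (∫ x in (0:ℝ)..1, y x)^κ)^(1-θ))) := by
  have hmono : ∀ g : ℝ → ℝ, Continuous g → (∀ x, 0 ≤ g x) → Function.Periodic g 1 → ∀ l ≤ 1, 0 < l →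
      ∫ s in x..x+l, g s ≤ ∫ s in (0:ℝ)..1, g s := by
    intro g hg hg0 hgp l hl hl0
    have e := hgp.intervalIntegral_add_eq x 0
    rw [zero_add] at e
    rw [← e]
    exact intervalIntegral.integral_mono_interval le_rfl (by linarith) (by linarith)
      (ae_of_all _ hg0) (hg.intervalIntegrable _ _)
  have hnn : ∀ g : ℝ → ℝ, (∀ x, 0 ≤ g x) → ∀ l, 0 < l → 0 ≤ ∫ s in x..x+l, g s := fun g hg l hl =>
    intervalIntegral.integral_nonneg (by linarith) (fun _ _ => hg _)
  set X := ∫ x in (0:ℝ)..1, G x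
  set Y := ∫ x in (0:ℝ)..1, y x
  have hX0 : 0 ≤ X := intervalIntegral.integral_nonneg (by norm_num) (fun _ _ => hG0 _)
  have hY0 : 0 ≤ Y := intervalIntegral.integral_nonneg (by norm_num) (fun _ _ => hy0 _)
  have main : ∀ δ : ℝ, 0 < δ → δ ≤ 1 →
      u x ≤ C * (2 * ((X^P)^θ * (M * Y^κ)^(1-θ))) + C * (2 * (δ^σ1 * X^P)) := by
    intro δ hδ hδ1
    obtain ⟨l, hl, hl1, h⟩ := stepL G y hG hy M κ P σ1 σ2 hκ hP E δ hδ hδ1 x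
    have hl0 : 0 < l := by linarith
    have hu := H x l hl0 hl1 x ⟨le_rfl, by linarith⟩
    have n1 : 0 ≤ C * (2 * ((X^P)^θ * (M * Y^κ)^(1-θ))) := by positivity
    have n2 : 0 ≤ C * (2 * (δ^σ1 * X^P)) := by positivity
    have gX := hmono G hG hG0 hGp l hl1 hl0
    have gY := hmono y hy hy0 hyp l hl1 hl0
    have pX := hnn G hG0 l hl0
    have pY := hnn y hy0 l hl0
    have h1' : 0 ≤ 1 - θ := by linarith
    rcases h with ⟨rfl, h⟩ | h
    · have : l^σ1 * (∫ s in x..x+l, G s)^P + l^σ2 * (M * (∫ s in x..x+l, y s)^κ) ≤ 2 * (l^σ1 * X^P) := by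
        have : l^σ1 * (∫ s in x..x+l, G s)^P ≤ l^σ1 * X^P := by gcongr
        linarith
      have := mul_le_mul_of_nonneg_left this hC
      linarith
    · have b := balanced (ρ := 0) (by positivity) (by positivity) hl0 hl1 h0 h1 (by linarith) h
      simp only [neg_zero, rpow_zero, one_mul] at b
      have : 2 * (((∫ s in x..x+l, G s)^P)^θ * (M * (∫ s in x..x+l, y s)^κ)^(1-θ)) ≤ 2 * ((X^P)^θ * (M * Y^κ)^(1-θ)) := by
        gcongr
      have := mul_le_mul_of_nonneg_left (b.trans this) hC
      linarith
  have lim : Tendsto (fun δ : ℝ => C * (2 * ((X^P)^θ * (M * Y^κ)^(1-θ))) + C * (2 * (δ^σ1 * X^P))) (𝓝[>] 0)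
      (𝓝 (C * (2 * ((X^P)^θ * (M * Y^κ)^(1-θ))) + C * (2 * ((0:ℝ)^σ1 * X^P)))) := by
    refine Tendsto.mono_left (Continuous.tendsto ?_ 0) nhdsWithin_le_nhds
    exact continuous_const.add (continuous_const.mul (continuous_const.mul
      ((continuous_id.rpow_const (fun _ => Or.inr hσ.le)).mul continuous_const)))
  rw [Real.zero_rpow hσ.ne'] at lim
  simp only [zero_mul, mul_zero, add_zero] at lim
  refine ge_of_tendsto lim ?_
  filter_upwards [Ioc_mem_nhdsGT (zero_lt_one (α := ℝ))] with δ hδ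
  exact main δ hδ.1 hδ.2

theorem core_fin (u G y : ℝ → ℝ) (hu : Continuous u) (hu0 : ∀ x, 0 ≤ u x) (hG : Continuous G) (hy : Continuous y)
    (hG0 : ∀ x, 0 ≤ G x) (hy0 : ∀ x, 0 ≤ y x)
    (M κ P σ1 σ2 C θ r : ℝ) (hM : 0 ≤ M) (hκ : 0 ≤ κ) (hP : 0 < P) (hσ : 0 < σ1) (hC : 0 ≤ C) (hr : 1 ≤ r)
    (E : ∀ t, M * (∫ x in t..t+1, y x)^κ ≤ (∫ x in t..t+1, G x)^P)
    (H : ∀ t l, 0 < l → l ≤ 1 → ∀ x ∈ Icc t (t+l),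
      u x ≤ C * (l^σ1 * (∫ x in t..t+l, G x)^P + l^σ2 * (M * (∫ x in t..t+l, y x)^κ)))
    (h0 : 0 ≤ θ) (h1 : θ < 1) (hexp : 0 ≤ θ * σ1 + (1-θ)*σ2 + 1/r) (hsum : 1/r ≤ θ*P+(1-θ)*κ) :
    ∫ x in (0:ℝ)..1, u x ^ r ≤
      (C * (2 * (((∫ x in (0:ℝ)..2, G x)^P)^θ * (M * (∫ x in (0:ℝ)..2, y x)^κ)^(1-θ))))^r := by
  have h1' : 0 ≤ 1 - θ := by linarith
  have hr0 : 0 < r := by linarith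
  have hur : Continuous fun x => u x ^ r := hu.rpow_const (fun _ => Or.inr hr0.le)
  have hur0 : ∀ x, 0 ≤ u x ^ r := fun x => Real.rpow_nonneg (hu0 x) r
  have hnn : ∀ g : ℝ → ℝ, (∀ x, 0 ≤ g x) → ∀ a b, a ≤ b → 0 ≤ ∫ s in a..b, g s := fun g hg a b hl =>
    intervalIntegral.integral_nonneg hl (fun _ _ => hg _)
  have hmono : ∀ g : ℝ → ℝ, Continuous g → (∀ x, 0 ≤ g x) → ∀ a b c d, c ≤ a → a ≤ b → b ≤ d →
      ∫ s in a..b, g s ≤ ∫ s in c..d, g s := by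
    intro g hg hg0 a b c d h1 h2 h3
    exact intervalIntegral.integral_mono_interval h1 h2 h3
      (ae_of_all _ hg0) (hg.intervalIntegrable _ _)
  have hadd : ∀ g : ℝ → ℝ, Continuous g → ∀ a b, ∫ s in (0:ℝ)..b, g s = (∫ s in (0:ℝ)..a, g s) + ∫ s in a..b, g s := by
    intro g hg a b
    rw [intervalIntegral.integral_add_adjacent_intervals (hg.intervalIntegrable _ _) (hg.intervalIntegrable _ _)]
  -- the superadditive gauge
  set a := P * θ * r with ha
  set b := κ * (1-θ) * r with hb
  set D := (C * 2)^r * (M^(1-θ))^r with hD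
  have ha0 : 0 ≤ a := by positivity
  have hb0 : 0 ≤ b := by positivity
  have hD0 : 0 ≤ D := by positivity
  have hab : 1 ≤ a + b := by
    rw [div_le_iff₀ hr0] at hsum
    rw [ha, hb]; linarith
  have hΦ : ∀ X Y : ℝ, 0 ≤ X → 0 ≤ Y →
      (C * (2 * ((X^P)^θ * (M * Y^κ)^(1-θ))))^r = D * (X^a * Y^b) := by
    intro X Y hX hY
    rw [Real.mul_rpow hM (by positivity), ← Real.rpow_mul hX, ← Real.rpow_mul hY,
      show C * (2 * (X^(P*θ) * (M^(1-θ) * Y^(κ*(1-θ))))) = ((C*2) * M^(1-θ)) * (X^(P*θ) * Y^(κ*(1-θ))) by ring,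
      Real.mul_rpow (by positivity) (by positivity), Real.mul_rpow (x := C * 2) (by positivity) (by positivity),
      Real.mul_rpow (x := X^(P*θ)) (by positivity) (by positivity), ← Real.rpow_mul hX, ← Real.rpow_mul hY]
  rw [hΦ _ _ (hnn G hG0 0 2 (by norm_num)) (hnn y hy0 0 2 (by norm_num))]
  set X2 := ∫ x in (0:ℝ)..2, G x
  set Y2 := ∫ x in (0:ℝ)..2, y x
  have hX2 : 0 ≤ X2 := hnn G hG0 0 2 (by norm_num)
  have hY2 : 0 ≤ Y2 := hnn y hy0 0 2 (by norm_num)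
  have main : ∀ n : ℕ, 1 ≤ n →
      ∫ x in (0:ℝ)..1, u x ^ r ≤ D * (X2^a * Y2^b) + (C * (2 * (((n:ℝ)⁻¹)^σ1 * X2^P)))^r := by
    intro n hn
    have hn0 : (0:ℝ) < n := by exact_mod_cast hn
    set δ : ℝ := (n:ℝ)⁻¹ with hδd
    have hδ : 0 < δ := by positivity
    have hδ1 : δ ≤ 1 := inv_le_one_of_one_le₀ (by exact_mod_cast hn)
    set ε := δ * (C * (2 * (δ^σ1 * X2^P)))^r with hε
    have hε0 : 0 ≤ ε := by positivity
    choose L hL1 hL2 hL3 using stepL G y hG hy M κ P σ1 σ2 hκ hP E δ hδ hδ1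
    -- one step
    have one : ∀ t, 0 ≤ t → t ≤ 1 → ∫ x in t..t + L t, u x ^ r ≤
        D * ((∫ x in t..t + L t, G x)^a * (∫ x in t..t + L t, y x)^b) + ε := by
      intro t ht0 ht1
      have hl0 : 0 < L t := by linarith [hL1 t]
      have pX := hnn G hG0 t (t + L t) (by linarith)
      have pY := hnn y hy0 t (t + L t) (by linarith)
      have gX := hmono G hG hG0 t (t + L t) 0 2 (by linarith) (by linarith) (by linarith [hL2 t])
      have bd : ∀ B : ℝ, (∀ x ∈ Icc t (t + L t), u x ≤ B) → ∫ x in t..t + L t, u x ^ r ≤ L t * B^r := by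
        intro B hB
        have := intervalIntegral.integral_mono_on (μ := volume) (by linarith : t ≤ t + L t) (g := fun _ => B^r)
          (hur.intervalIntegrable _ _) (by simp) (fun x hx => Real.rpow_le_rpow (hu0 x) (hB x hx) hr0.le)
        simpa using this
      rcases hL3 t with ⟨hl, h⟩ | h
      · refine (bd (C * (2 * (δ^σ1 * X2^P))) ?_).trans ?_
        · intro x hx
          refine (H t (L t) hl0 (hL2 t) x hx).trans (mul_le_mul_of_nonneg_left ?_ hC)
          have : L t^σ1 * (∫ s in t..t+L t, G s)^P ≤ δ^σ1 * X2^P := by rw [hl] at gX pX ⊢; gcongr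
          linarith
        · rw [hl]
          have : 0 ≤ D * ((∫ x in t..t + δ, G x)^a * (∫ x in t..t + δ, y x)^b) := by
            rw [hl] at pX pY; positivity
          linarith
      · have bal := balanced (ρ := 1/r) (by positivity) (by positivity) hl0 (hL2 t) h0 h1 hexp h
        set X := ∫ x in t..t + L t, G x
        set Y := ∫ x in t..t + L t, y x
        refine (bd ((L t)^(-(1/r)) * (C * (2 * ((X^P)^θ * (M * Y^κ)^(1-θ))))) ?_).trans ?_
        · intro x hx
          refine (H t (L t) hl0 (hL2 t) x hx).trans ((mul_le_mul_of_nonneg_left bal hC).trans_eq ?_)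
          ring
        · rw [Real.mul_rpow (by positivity) (by positivity), hΦ X Y pX pY, ← Real.rpow_mul hl0.le, ← mul_assoc]
          have : L t * L t ^ (-(1/r) * r) = 1 := by
            rw [show -(1/r)*r = -1 by field_simp, Real.rpow_neg_one, mul_inv_cancel₀ hl0.ne']
          rw [this]; linarith
    -- iteration
    let T : ℕ → ℝ := fun k => Nat.rec 0 (fun _ t => t + L t) k
    have T0 : T 0 = 0 := rfl
    have Ts : ∀ k, T (k+1) = T k + L (T k) := fun k => rfl
    have Tge : ∀ k : ℕ, k * δ ≤ T k := by
      intro k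
      induction k with
      | zero => simp [T0]
      | succ k ih => rw [Ts]; push_cast; linarith [hL1 (T k)]
    have hex : ∃ k, 1 ≤ T k := ⟨n, by have := Tge n; rwa [hδd, mul_inv_cancel₀ hn0.ne'] at this⟩
    have hTn : 1 ≤ T n := by have := Tge n; rwa [hδd, mul_inv_cancel₀ hn0.ne'] at this
    obtain ⟨k, hT1, hfn, hlt⟩ : ∃ k, 1 ≤ T k ∧ k ≤ n ∧ ∀ j < k, T j ≤ 1 := by
      classical
      exact ⟨Nat.find hex, Nat.find_spec hex, Nat.find_min' hex hTn,
        fun k hk => (not_le.1 (Nat.find_min hex hk)).le⟩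
    have Tnn : ∀ k, 0 ≤ T k := fun k => le_trans (by positivity) (Tge k)
    have ind : ∀ i ≤ k, ∫ x in (0:ℝ)..T i, u x ^ r ≤
        D * ((∫ x in (0:ℝ)..T i, G x)^a * (∫ x in (0:ℝ)..T i, y x)^b) + i * ε := by
      intro i
      induction i with
      | zero =>
        intro _
        simp only [T0, intervalIntegral.integral_same, Nat.cast_zero, zero_mul, add_zero]
        positivity
      | succ i ih =>
        intro hk
        have i1 := ih (by omega)
        have i2 := one (T i) (Tnn i) (hlt i (by omega))
        have hl0 : 0 < L (T i) := by linarith [hL1 (T i)]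
        have s := superadd ha0 hb0 hab (hnn G hG0 0 (T i) (Tnn i)) (hnn G hG0 (T i) (T i + L (T i)) (by linarith))
          (hnn y hy0 0 (T i) (Tnn i)) (hnn y hy0 (T i) (T i + L (T i)) (by linarith))
        rw [Ts, hadd _ hur (T i), hadd _ hG (T i), hadd _ hy (T i)]
        have := mul_le_mul_of_nonneg_left s hD0
        push_cast
        linarith
    have fin := ind _ le_rfl
    have hT2 : T k ≤ 2 := by
      rcases Nat.eq_zero_or_eq_succ_pred k with h | h
      · rw [h, T0]; norm_num
      · rw [h, Nat.succ_eq_add_one, Ts]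
        have := hlt k.pred (by omega)
        linarith [hL2 (T k.pred)]
    have f1 := hmono _ hur hur0 0 1 0 (T k) le_rfl (by norm_num) hT1
    have f2 := hmono _ hG hG0 0 (T k) 0 2 le_rfl (Tnn k) hT2
    have f3 := hmono _ hy hy0 0 (T k) 0 2 le_rfl (Tnn k) hT2
    have p2 := hnn G hG0 0 (T k) (Tnn k)
    have p3 := hnn y hy0 0 (T k) (Tnn k)
    have f4 : D * ((∫ x in (0:ℝ)..T k, G x)^a * (∫ x in (0:ℝ)..T k, y x)^b) ≤ D * (X2^a*Y2^b) := by gcongr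
    have f5 : (k:ℝ) * ε ≤ (C * (2 * (δ^σ1 * X2^P)))^r := by
      calc (k:ℝ) * ε ≤ n * ε := by gcongr
        _ = _ := by rw [hε, ← mul_assoc, hδd, mul_inv_cancel₀ hn0.ne', one_mul]
    linarith
  have lim : Tendsto (fun n : ℕ => D * (X2^a * Y2^b) + (C * (2 * (((n:ℝ)⁻¹)^σ1 * X2^P)))^r) atTop
      (𝓝 (D * (X2^a * Y2^b) + (C * (2 * ((0:ℝ)^σ1 * X2^P)))^r)) := by
    have hc : Continuous fun δ : ℝ => D * (X2^a * Y2^b) + (C * (2 * (δ^σ1 * X2^P)))^r :=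
      continuous_const.add ((continuous_const.mul (continuous_const.mul
      ((continuous_id.rpow_const (fun _ => Or.inr hσ.le)).mul continuous_const))).rpow_const (fun _ => Or.inr hr0.le))
    exact (hc.tendsto 0).comp tendsto_inv_atTop_nhds_zero_nat
  rw [Real.zero_rpow hσ.ne'] at lim
  simp only [zero_mul, mul_zero, Real.zero_rpow hr0.ne', add_zero] at lim
  refine ge_of_tendsto lim ?_
  filter_upwards [eventually_ge_atTop 1] with n hn
  exact main n hn

theorem memLp_cont (f : ℝ → ℝ) (hf : Continuous f) (s : ℝ≥0∞) (a b : ℝ) :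
    MemLp f s (volume.restrict (Ioc a b)) := by
  obtain ⟨C, hC⟩ := (isCompact_Icc (a := a) (b := b)).exists_bound_of_continuousOn hf.continuousOn
  refine MemLp.of_bound hf.aestronglyMeasurable C ?_
  filter_upwards [ae_restrict_mem measurableSet_Ioc] with x hx
  exact hC x ⟨hx.1.le, hx.2⟩

theorem holder_one (f : ℝ → ℝ) (hf : Continuous f) (s : ℝ) (hs : 1 ≤ s) (a l : ℝ) (hl : 0 < l) :
    ∫ x in a..a+l, |f x| ≤ l^(1-1/s) * (∫ x in a..a+l, |f x|^s)^(1/s) := by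
  rcases hs.eq_or_lt with rfl | hs
  · simp
  · have hc := Real.HolderConjugate.conjExponent hs
    have := integral_mul_le_Lp_mul_Lq_of_nonneg (μ := volume.restrict (Ioc a (a+l))) hc
      (f := fun x => |f x|) (g := fun _ => 1) (ae_of_all _ fun x => abs_nonneg _) (ae_of_all _ fun x => zero_le_one)
      (memLp_cont _ hf.abs _ _ _) (memLp_cont _ continuous_const _ _ _)
    have e : 1 / s.conjExponent = 1 - 1/s := by
      have := hc.inv_add_inv_eq_one
      simp only [one_div]; linarith
    rw [e] at this
    rw [intervalIntegral.integral_of_le (by linarith), intervalIntegral.integral_of_le (by linarith), mul_comm]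
    simpa [hl.le] using this

theorem lpNorm_fin (f : ℝ → ℝ) (hf : Continuous f) (s : ℝ) (hs : 1 ≤ s) :
    lpNorm (ENNReal.ofReal s) f = (∫ x in (0:ℝ)..1, |f x|^s)^(1/s) := by
  have hs0 : 0 < s := by linarith
  rw [lpNorm, μ₀, MemLp.eLpNorm_eq_integral_rpow_norm (by simpa using hs0) (by simp) (memLp_cont f hf _ _ _),
    ENNReal.toReal_ofReal hs0.le, ENNReal.toReal_ofReal (by positivity), intervalIntegral.integral_of_le (by norm_num)]
  simp

theorem lpNorm_le_bound (f : ℝ → ℝ) (q : ℝ≥0∞) (B : ℝ) (hB : 0 ≤ B) (h : ∀ x, |f x| ≤ B) : lpNorm q f ≤ B := by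
  have := eLpNorm_le_of_ae_bound (p := q) (μ := μ₀) (f := f) (C := B) (ae_of_all _ h)
  have e : μ₀ univ = 1 := by simp [μ₀]
  rw [e, ENNReal.one_rpow, one_mul] at this
  exact ENNReal.toReal_le_of_le_ofReal hB this

theorem le_lpNorm_top (f : ℝ → ℝ) (hf : Continuous f) (hp : Function.Periodic f 1) (x : ℝ) : |f x| ≤ lpNorm ∞ f := by
  set M := lpNorm ∞ f with hM
  have hfin : eLpNorm f ∞ μ₀ ≠ ∞ := (memLp_cont f hf ∞ 0 1).eLpNorm_ne_top
  have h1 : ∀ᵐ x ∂(volume.restrict (Ioc (0:ℝ) 1)), |f x| ≤ M := by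
    have := ae_le_eLpNormEssSup (f := f) (μ := μ₀)
    filter_upwards [this] with x hx
    rw [← eLpNorm_exponent_top] at hx
    have := ENNReal.toReal_mono hfin hx
    rw [toReal_enorm] at this
    exact this
  have h2 : ∀ᵐ x ∂(volume.restrict (Ioo (0:ℝ) 1)), |f x| ≤ M :=
    ae_restrict_of_ae_restrict_of_subset Ioo_subset_Ioc_self h1
  have h3 : EqOn (fun x => max |f x| M) (fun _ => M) (Ioo (0:ℝ) 1) :=
    Measure.eqOn_open_of_ae_eq (μ := volume) (by filter_upwards [h2] with x hx; exact max_eq_right hx)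
      isOpen_Ioo (hf.abs.max continuous_const).continuousOn continuousOn_const
  have h4 : ∀ z ∈ Ioo (0:ℝ) 1, |f z| ≤ M := fun z hz => max_eq_right_iff.1 (h3 hz)
  have h5 : ∀ ⦃z⦄, z ∈ closure (Ioo (0:ℝ) 1) → |f z| ≤ M :=
    le_on_closure h4 hf.abs.continuousOn continuousOn_const
  rw [closure_Ioo (by norm_num)] at h5
  have h6 : f (Int.fract x) = f x := by
    have := hp.sub_int_mul_eq (x := x) ⌊x⌋
    rwa [mul_one] at this
  rw [← h6]
  exact h5 ⟨Int.fract_nonneg x, (Int.fract_lt_one x).le⟩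

theorem qdata (q : ℝ≥0∞) (hq : 1 ≤ q) (f : ℝ → ℝ) (hf : Continuous f) (hp : Function.Periodic f 1) :
    ∃ (M : ℝ) (y : ℝ → ℝ), 0 ≤ M ∧ Continuous y ∧ (∀ x, 0 ≤ y x) ∧ Function.Periodic y 1 ∧
      (∀ a l, 0 < l → ∫ x in a..a+l, |f x| ≤ l^(1-(1/q).toReal) * (M * (∫ x in a..a+l, y x)^(1/q).toReal)) ∧
      M * (∫ x in (0:ℝ)..1, y x)^(1/q).toReal = lpNorm q f := by
  by_cases h : q = ∞
  · subst h
    refine ⟨lpNorm ∞ f, fun _ => 1, ENNReal.toReal_nonneg, continuous_const, fun _ => zero_le_one, fun _ => rfl, ?_, ?_⟩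
    · intro a l hl
      have := intervalIntegral.integral_mono_on (μ := volume) (by linarith : a ≤ a + l) (g := fun _ => lpNorm ∞ f)
          (hf.abs.intervalIntegrable _ _) (by simp) (fun x hx => le_lpNorm_top f hf hp x)
      simpa using this
    · simp
  · have hs : 1 ≤ q.toReal := by
      have := ENNReal.toReal_mono h hq
      simpa using this
    have e : (1/q).toReal = 1/q.toReal := by simp
    rw [e]
    refine ⟨1, fun x => |f x|^q.toReal, zero_le_one, hf.abs.rpow_const (fun _ => Or.inr (by linarith)),
      fun x => by positivity, fun x => by simp only [hp x], ?_, ?_⟩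
    · intro a l hl
      rw [one_mul]
      exact holder_one f hf _ hs a l hl
    · rw [one_mul, ← lpNorm_fin f hf _ hs, ENNReal.ofReal_toReal h]

theorem gamma_bound (m γ : ℕ) (hγ : γ < m) (q r : ℝ≥0∞) (hq : 1 ≤ q) (hr : 1 ≤ r)
    (p : ℝ) (hp : 1 < p) (θ : ℝ) (h0 : 0 ≤ θ) (h1 : θ < 1)
    (hexp : 0 ≤ θ * ((m:ℝ) - γ - 1/p) + (1-θ)*(-γ - (1/q).toReal) + (1/r).toReal)
    (hsum : (1/r).toReal ≤ θ * (1/p) + (1-θ)*(1/q).toReal) :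
    ∃ C ≥ 0, ∀ h : ℝ → ℝ, Function.Periodic h 1 → ContDiff ℝ m h →
      lpNorm r (iteratedDeriv γ h) ≤ C * (normKP m (ENNReal.ofReal p) h) ^ θ * (lpNorm q h) ^ (1 - θ) := by
  have hp0 : 0 < p := by linarith
  have h1' : 0 ≤ 1 - θ := by linarith
  obtain ⟨C, hC, HC⟩ := Lj (m - γ - 1) γ
  rw [show γ + (m - γ - 1) + 1 = m by omega] at HC
  obtain ⟨C0, hC0, HC0⟩ := Lj (m - 1) 0
  rw [show 0 + (m - 1) + 1 = m by omega] at HC0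
  set K := (1 + C0^p)^(1/p) with hK
  have hK0 : 0 ≤ K := by positivity
  refine ⟨C * 2 * ((2 * K)^θ * 2^(1-θ)), by positivity, fun f hfp hf => ?_⟩
  have hfc : Continuous f := hf.continuous
  have hgc : Continuous (iteratedDeriv m f) := hf.continuous_iteratedDeriv m le_rfl
  have huc : Continuous (iteratedDeriv γ f) := hf.continuous_iteratedDeriv γ (by exact_mod_cast hγ.le)
  have hgp : Function.Periodic (iteratedDeriv m f) 1 := by
    intro x
    have := congrFun (iteratedDeriv_comp_add_const m f 1) x
    rw [← this]
    congr 1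
    exact funext hfp
  obtain ⟨M, y, hM, hy, hy0, hyp, hyH, hyQ⟩ := qdata q hq f hfc hfp
  set κ := (1/q).toReal with hκ
  have hκ0 : 0 ≤ κ := ENNReal.toReal_nonneg
  have hκ1 : κ ≤ 1 := by
    have : (1/q) ≤ 1 := by rw [one_div]; exact ENNReal.inv_le_one.2 hq
    have := ENNReal.toReal_mono (by simp) this
    rwa [ENNReal.toReal_one] at this
  set N := normKP m (ENNReal.ofReal p) f with hN
  set Q := lpNorm q f with hQ
  have hA0 : 0 ≤ lpNorm (ENNReal.ofReal p) (iteratedDeriv m f) := ENNReal.toReal_nonneg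
  have hB0 : 0 ≤ lpNorm (ENNReal.ofReal p) f := ENNReal.toReal_nonneg
  have hN0 : 0 ≤ N := add_nonneg hA0 hB0
  have hQ0 : 0 ≤ Q := ENNReal.toReal_nonneg
  have hgpow : Continuous fun x => |iteratedDeriv m f x|^p := hgc.abs.rpow_const (fun _ => Or.inr hp0.le)
  have hgpowp : Function.Periodic (fun x => |iteratedDeriv m f x|^p) 1 := fun x => by simp only [hgp x]
  have hfpowp : Function.Periodic (fun x => |f x|^p) 1 := fun x => by simp only [hfp x]
  -- sup bound
  have hsup : ∀ x, |f x| ≤ C0 * N := by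
    intro x
    have h := HC0 f hf x 1 one_pos x ⟨le_rfl, by linarith⟩
    have e1 := holder_one _ hgc p hp.le x 1 one_pos
    have e2 := holder_one _ hfc p hp.le x 1 one_pos
    rw [hgpowp.intervalIntegral_add_eq x 0, zero_add, ← lpNorm_fin _ hgc p hp.le, one_rpow, one_mul] at e1
    rw [hfpowp.intervalIntegral_add_eq x 0, zero_add, ← lpNorm_fin _ hfc p hp.le, one_rpow, one_mul] at e2
    simp only [one_pow, one_mul, iteratedDeriv_zero] at h
    refine h.trans (mul_le_mul_of_nonneg_left ?_ hC0)
    rw [hN, normKP]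
    linarith
  have hQN : Q ≤ C0 * N := lpNorm_le_bound f q _ (by positivity) hsup
  set G : ℝ → ℝ := fun x => |iteratedDeriv m f x|^p + (C0*N)^p with hGd
  have hG : Continuous G := hgpow.add continuous_const
  have hG0 : ∀ x, 0 ≤ G x := fun x => by positivity
  have hGp : Function.Periodic G 1 := fun x => by simp only [hGd, hgp x]
  have hGint : ∀ a l : ℝ, ∫ x in a..a+l, G x = (∫ x in a..a+l, |iteratedDeriv m f x|^p) + l * (C0*N)^p := by
    intro a l
    rw [hGd, intervalIntegral.integral_add (hgpow.intervalIntegrable _ _) (by simp)]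
    simp
  set A := lpNorm (ENNReal.ofReal p) (iteratedDeriv m f) with hA
  have hAp : ∫ x in (0:ℝ)..1, |iteratedDeriv m f x|^p = A^p := by
    rw [hA, lpNorm_fin _ hgc p hp.le, ← Real.rpow_mul (intervalIntegral.integral_nonneg (by norm_num) (fun _ _ => by positivity))]
    simp [hp0.ne']
  have hAN : A ≤ N := by rw [hN, normKP]; linarith
  have hX1 : ∫ x in (0:ℝ)..1, G x ≤ (1 + C0^p) * N^p := by
    have := hGint 0 1
    rw [zero_add, hAp, one_mul, Real.mul_rpow hC0 hN0] at this
    rw [this]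
    have : A^p ≤ N^p := by gcongr
    linarith
  have hXn : 0 ≤ ∫ x in (0:ℝ)..1, G x := intervalIntegral.integral_nonneg (by norm_num) (fun _ _ => hG0 _)
  have hYn : 0 ≤ ∫ x in (0:ℝ)..1, y x := intervalIntegral.integral_nonneg (by norm_num) (fun _ _ => hy0 _)
  have hX1P : (∫ x in (0:ℝ)..1, G x)^(1/p) ≤ K * N := by
    refine (Real.rpow_le_rpow hXn hX1 (by positivity)).trans_eq ?_
    rw [Real.mul_rpow (by positivity) (by positivity), ← Real.rpow_mul hN0]
    simp [hp0.ne', hK]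
  have hdouble : ∀ g : ℝ → ℝ, Continuous g → Function.Periodic g 1 →
      ∫ x in (0:ℝ)..2, g x = 2 * ∫ x in (0:ℝ)..1, g x := by
    intro g hg hgp
    have e := hgp.intervalIntegral_add_eq 1 0
    rw [zero_add] at e
    rw [← intervalIntegral.integral_add_adjacent_intervals (hg.intervalIntegrable 0 1) (hg.intervalIntegrable 1 2),
      show (2:ℝ) = 1 + 1 by norm_num, e]
    ring
  have two_le : ∀ s : ℝ, s ≤ 1 → (2:ℝ)^s ≤ 2 := fun s hs => by
    simpa using Real.rpow_le_rpow_of_exponent_le (by norm_num : (1:ℝ) ≤ 2) hs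
  have hX2P : (∫ x in (0:ℝ)..2, G x)^(1/p) ≤ 2 * K * N := by
    rw [hdouble G hG hGp, Real.mul_rpow (by norm_num) hXn, mul_assoc]
    have := two_le (1/p) (by rw [div_le_one hp0]; exact hp.le)
    gcongr
  have hY2 : M * (∫ x in (0:ℝ)..2, y x)^κ ≤ 2 * Q := by
    rw [hdouble y hy hyp, Real.mul_rpow (by norm_num) hYn, ← hyQ]
    have := two_le κ hκ1
    have hh : 0 ≤ M * (∫ x in (0:ℝ)..1, y x)^κ := by positivity
    nlinarith
  have E : ∀ t, M * (∫ x in t..t+1, y x)^κ ≤ (∫ x in t..t+1, G x)^(1/p) := by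
    intro t
    rw [hyp.intervalIntegral_add_eq t 0, zero_add, hyQ, hGint, one_mul]
    refine hQN.trans ?_
    calc C0 * N = ((C0*N)^p)^(1/p) := by
          rw [← Real.rpow_mul (by positivity)]; simp [hp0.ne']
      _ ≤ _ := by
          have : 0 ≤ ∫ x in t..t+1, |iteratedDeriv m f x|^p :=
            intervalIntegral.integral_nonneg (by linarith) (fun _ _ => by positivity)
          gcongr
          linarith
  have H : ∀ t l, 0 < l → l ≤ 1 → ∀ x ∈ Icc t (t+l),
      |iteratedDeriv γ f x| ≤ C * (l^((m:ℝ) - γ - 1/p) * (∫ x in t..t+l, G x)^(1/p) +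
        l^(-(γ:ℝ) - κ) * (M * (∫ x in t..t+l, y x)^κ)) := by
    intro t l hl hl1 x hx
    have hh := HC f hf t l hl x hx
    have e1 := holder_one _ hgc p hp.le t l hl
    have e2 := hyH t l hl
    have pos : 0 ≤ ∫ x in t..t+l, |iteratedDeriv m f x|^p :=
      intervalIntegral.integral_nonneg (by linarith) (fun _ _ => by positivity)
    have e3 : (∫ x in t..t+l, |iteratedDeriv m f x|^p)^(1/p) ≤ (∫ x in t..t+l, G x)^(1/p) := by
      rw [hGint]
      have : 0 ≤ l * (C0 * N)^p := by positivity
      gcongr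
      linarith
    have e4 : ∫ x in t..t+l, |iteratedDeriv m f x| ≤ l^(1-1/p) * (∫ x in t..t+l, G x)^(1/p) :=
      e1.trans (by gcongr)
    have e5 : l^(γ+1) * |iteratedDeriv γ f x| ≤
        C * (l^m * (l^(1-1/p) * (∫ x in t..t+l, G x)^(1/p)) + l^(1-κ) * (M * (∫ x in t..t+l, y x)^κ)) :=
      hh.trans (by gcongr)
    have f1 : l^m * l^(1-1/p) = l^(γ+1) * l^((m:ℝ) - γ - 1/p) := by
      rw [← Real.rpow_natCast, ← Real.rpow_natCast, ← Real.rpow_add hl, ← Real.rpow_add hl]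
      congr 1; push_cast; ring
    have f2 : l^(1-κ) = l^(γ+1) * l^(-(γ:ℝ) - κ) := by
      rw [← Real.rpow_natCast, ← Real.rpow_add hl]
      congr 1; push_cast; ring
    rw [← mul_assoc (l^m), f1, f2] at e5
    refine le_of_mul_le_mul_left (e5.trans_eq ?_) (by positivity : 0 < l^(γ+1))
    ring
  have hσ : 0 < (m:ℝ) - γ - 1/p := by
    have : (γ:ℝ) + 1 ≤ m := by exact_mod_cast hγ
    have : 1/p < 1 := by rw [div_lt_one hp0]; exact hp
    linarith
  -- final assembly
  have assemble : ∀ X Y : ℝ, 0 ≤ X → 0 ≤ Y → X ≤ 2 * K * N → Y ≤ 2 * Q →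
      C * (2 * (X^θ * Y^(1-θ))) ≤ C * 2 * ((2 * K)^θ * 2^(1-θ)) * N^θ * Q^(1-θ) := by
    intro X Y hX hY hX' hY'
    calc C * (2 * (X^θ * Y^(1-θ))) ≤ C * (2 * ((2*K*N)^θ * (2*Q)^(1-θ))) := by gcongr
      _ = _ := by
        rw [Real.mul_rpow (x := 2*K) (by positivity) hN0, Real.mul_rpow (x := 2) (y := Q) (by positivity) hQ0]
        ring
  by_cases hrt : r = ∞
  · subst hrt
    have ct : ∀ x, |iteratedDeriv γ f x| ≤ _ := core_top (fun x => |iteratedDeriv γ f x|) G y hG hy hG0 hy0 hGp hyp M κ (1/p) _ _ C θ hM hκ0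
      (by positivity) hσ hC E H h0 h1 (by simpa using hexp)
    have asm := assemble _ _ (by positivity) (by positivity)
      (hX1P.trans (by nlinarith [mul_nonneg hK0 hN0])) (by rw [hyQ]; linarith : M * (∫ x in (0:ℝ)..1, y x)^κ ≤ 2 * Q)
    exact lpNorm_le_bound _ _ _ (by positivity) (fun x => (ct x).trans asm)
  · have hs : 1 ≤ r.toReal := by
      have := ENNReal.toReal_mono hrt hr
      simpa using this
    have e : (1/r).toReal = 1/r.toReal := by simp
    rw [e] at hexp hsum
    have cf := core_fin (fun x => |iteratedDeriv γ f x|) G y huc.abs (fun _ => abs_nonneg _) hG hy hG0 hy0 M κ (1/p) _ _ C θ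
      r.toReal hM hκ0 (by positivity) hσ hC hs E H h0 h1 hexp hsum
    have hXn2 : 0 ≤ ∫ x in (0:ℝ)..2, G x := intervalIntegral.integral_nonneg (by norm_num) (fun _ _ => hG0 _)
    have hYn2 : 0 ≤ ∫ x in (0:ℝ)..2, y x := intervalIntegral.integral_nonneg (by norm_num) (fun _ _ => hy0 _)
    have asm := assemble _ _ (by positivity) (by positivity) hX2P hY2
    have l1 := lpNorm_fin _ huc _ hs
    rw [ENNReal.ofReal_toReal hrt] at l1
    rw [l1]
    refine le_trans ?_ asm
    refine (Real.rpow_le_rpow (intervalIntegral.integral_nonneg (by norm_num) (fun _ _ => by positivity)) cf (by positivity)).trans_eq ?_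
    rw [← Real.rpow_mul (by positivity), mul_one_div_cancel (by linarith), Real.rpow_one]

/-- **Gagliardo–Nirenberg inequality on the circle, part a).**
Let `m ∈ ℕ`, `β ∈ ℕ₀` with `β ≤ m−1`, let `q, r ∈ [1,∞]` and `p ∈ (1,∞)`.
If `θ`, determined by `β − 1/r = θ(m − 1/p) − (1−θ)/q`, satisfies `θ ∈ [β/m, 1)`,
then there is `C = C(β,p,q,r,m) > 0` such that every `C^m` function `h` on `S¹`
satisfies `|h|_{β,r} ≤ C |h|_{m,p}^θ |h|_q^{1−θ}`. -/
theorem gagliardo_nirenberg_a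
    (m : ℕ) (hm : 1 ≤ m) (β : ℕ) (hβ : β ≤ m - 1)
    (q r : ℝ≥0∞) (hq : 1 ≤ q) (hr : 1 ≤ r)
    (p : ℝ) (hp : 1 < p)
    (θ : ℝ)
    (hθeq : (β : ℝ) - (1 / r).toReal = θ * ((m : ℝ) - 1 / p) - (1 - θ) * (1 / q).toReal)
    (hθlo : (β : ℝ) / (m : ℝ) ≤ θ) (hθhi : θ < 1) :
    ∃ C > 0, ∀ h : ℝ → ℝ, Function.Periodic h 1 → ContDiff ℝ (m : ℕ∞) h →
      normKP β r h ≤ C * (normKP m (ENNReal.ofReal p) h) ^ θ * (lpNorm q h) ^ (1 - θ) := by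
  have hm0 : (0:ℝ) < m := by exact_mod_cast hm
  have h0 : 0 ≤ θ := le_trans (by positivity) hθlo
  have hβm : (β:ℝ) ≤ θ * m := by rwa [div_le_iff₀ hm0] at hθlo
  have hsum : (1/r).toReal ≤ θ * (1/p) + (1-θ)*(1/q).toReal := by nlinarith
  obtain ⟨C1, hC1, H1⟩ := gamma_bound m β (by omega) q r hq hr p hp θ h0 hθhi (by nlinarith) hsum
  obtain ⟨C2, hC2, H2⟩ := gamma_bound m 0 (by omega) q r hq hr p hp θ h0 hθhi
    (by have : (0:ℝ) ≤ β := by positivity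
        push_cast; nlinarith) hsum
  refine ⟨C1 + C2 + 1, by positivity, fun h hper hcd => ?_⟩
  have a1 := H1 h hper hcd
  have a2 := H2 h hper hcd
  rw [iteratedDeriv_zero] at a2
  have hN0 : 0 ≤ normKP m (ENNReal.ofReal p) h := add_nonneg ENNReal.toReal_nonneg ENNReal.toReal_nonneg
  have hQ0 : 0 ≤ lpNorm q h := ENNReal.toReal_nonneg
  have hn : 0 ≤ (normKP m (ENNReal.ofReal p) h) ^ θ * (lpNorm q h) ^ (1 - θ) := by positivity
  rw [normKP]
  linarith

end BurgersTurb
end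
end

section
/- Let m ∈ ℕ, β ∈ ℕ₀ with β ≤ m−1, let q, r ∈ [1,∞] (with the convention 1/∞ = 0), and let p = 1 or p = ∞. Suppose θ = β/m and the relation β − 1/r = θ(m − 1/p) − (1−θ)(1/q) holds. Then there exists a constant C = C(β,p,q,r,m) > 0 such that every function h of class C^m on the circle S¹ = ℝ/ℤ satisfies |h|_{β,r} ≤ C · |h|_{m,p}^θ · |h|_q^{1−θ}. -/
open MeasureTheory Real Set Filter
open scoped ENNReal Topology

noncomputable section

namespace BurgersTurb

lemma cont_rpow {f : ℝ → ℝ} (hf : Continuous f) {s : ℝ} (hs : 0 ≤ s) :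
    Continuous (fun x => f x ^ s) := hf.rpow_const (fun _ => Or.inr hs)

instance : IsProbabilityMeasure μ₀ := ⟨by simp [μ₀]⟩

lemma memLp_of_cont {f : ℝ → ℝ} (hf : Continuous f) (p : ℝ≥0∞) : MemLp f p μ₀ := by
  obtain ⟨C, hC⟩ := (isCompact_Icc (a := (0:ℝ)) (b := 1)).exists_bound_of_continuousOn
    hf.continuousOn
  refine MemLp.of_bound hf.aestronglyMeasurable C ?_
  exact (ae_restrict_iff' measurableSet_Ioc).2 (Eventually.of_forall fun x hx =>
    hC x (Ioc_subset_Icc_self hx))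

lemma lpNorm_nonneg' (p : ℝ≥0∞) (f : ℝ → ℝ) : 0 ≤ lpNorm p f := ENNReal.toReal_nonneg

/-- The `L_{1/a}` norm. -/
def NN (a : ℝ) (f : ℝ → ℝ) : ℝ := lpNorm (ENNReal.ofReal a)⁻¹ f

lemma NN_nonneg (a : ℝ) (f : ℝ → ℝ) : 0 ≤ NN a f := ENNReal.toReal_nonneg

lemma NN_pos_eq {a : ℝ} (ha : 0 < a) {f : ℝ → ℝ} (hf : Continuous f) :
    NN a f = (∫ x in (0:ℝ)..1, |f x| ^ (1/a)) ^ a := by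
  unfold NN lpNorm
  rw [MemLp.eLpNorm_eq_integral_rpow_norm (by simp) (by simp [ha]) (memLp_of_cont hf _),
    ENNReal.toReal_ofReal (by positivity), intervalIntegral.integral_of_le zero_le_one]
  simp [ENNReal.toReal_ofReal ha.le, μ₀]

lemma abs_le_NN_zero {f : ℝ → ℝ} (hf : Continuous f) (hp : Function.Periodic f 1) (x : ℝ) :
    |f x| ≤ NN 0 f := by
  have h1 : ∀ᵐ y ∂μ₀, |f y| ≤ NN 0 f := by
    have := ae_le_eLpNormEssSup (f := f) (μ := μ₀)
    filter_upwards [this] with y hy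
    have h3 : eLpNormEssSup f μ₀ ≠ ⊤ := by
      rw [← eLpNorm_exponent_top]; exact (memLp_of_cont hf ⊤).2.ne
    have := ENNReal.toReal_mono h3 hy
    simpa [NN, lpNorm] using this
  have h2 : ∀ y ∈ Ioo (0:ℝ) 1, |f y| ≤ NN 0 f := by
    by_contra! hcon
    obtain ⟨y, hy, hlt⟩ := hcon
    have hop : IsOpen (Ioo (0:ℝ) 1 ∩ {z | NN 0 f < |f z|}) :=
      isOpen_Ioo.inter (isOpen_lt continuous_const hf.abs)
    have hpos := hop.measure_pos volume ⟨y, hy, hlt⟩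
    rw [μ₀, ae_restrict_iff' measurableSet_Ioc, ae_iff] at h1
    refine hpos.ne' (measure_mono_null ?_ h1)
    rintro z ⟨hz, hz2⟩
    simp only [mem_ofPred_eq] at hz2 ⊢
    intro hc
    exact absurd (hc (Ioo_subset_Ioc_self hz)) (not_le.2 hz2)
  have h3 : ∀ y ∈ Icc (0:ℝ) 1, |f y| ≤ NN 0 f := by
    rw [← closure_Ioo (zero_ne_one)]
    exact fun y hy => closure_minimal (t := {z | |f z| ≤ NN 0 f}) h2
      (isClosed_le hf.abs continuous_const) hy
  obtain ⟨y, hy, hxy⟩ := hp.exists_mem_Ico₀ one_pos x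
  rw [hxy]; exact h3 y (Ico_subset_Icc_self hy)

lemma NN_zero_le {f : ℝ → ℝ} {M : ℝ} (hM : ∀ x, |f x| ≤ M) : NN 0 f ≤ M := by
  have hM0 : 0 ≤ M := (abs_nonneg _).trans (hM 0)
  unfold NN lpNorm
  simp only [ENNReal.ofReal_zero, ENNReal.inv_zero, eLpNorm_exponent_top]
  refine ENNReal.toReal_le_of_le_ofReal hM0 ?_
  exact eLpNormEssSup_le_of_ae_bound (Eventually.of_forall hM)

lemma hold {f g : ℝ → ℝ} (hf : Continuous f) (hg : Continuous g) (hf0 : ∀ x, 0 ≤ f x)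
    (hg0 : ∀ x, 0 ≤ g x) {s t : ℝ} (hs : 0 ≤ s) (ht : 0 ≤ t) (hst : s + t = 1) :
    ∫ x in (0:ℝ)..1, f x ^ s * g x ^ t ≤
      (∫ x in (0:ℝ)..1, f x) ^ s * (∫ x in (0:ℝ)..1, g x) ^ t := by
  simp only [intervalIntegral.integral_of_le zero_le_one]
  have key := ENNReal.lintegral_mul_norm_pow_le (μ := volume.restrict (Ioc (0:ℝ) 1))
    (f := fun x => ENNReal.ofReal (f x)) (g := fun x => ENNReal.ofReal (g x))
    (by fun_prop) (by fun_prop) hs ht hst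
  have int : ∀ k : ℝ → ℝ, Continuous k → Integrable k (volume.restrict (Ioc (0:ℝ) 1)) :=
    fun k hk => hk.integrableOn_Ioc
  have hc : Continuous (fun x => f x ^ s * g x ^ t) := (cont_rpow hf hs).mul (cont_rpow hg ht)
  have h0 : ∀ x, 0 ≤ f x ^ s * g x ^ t := fun x =>
    mul_nonneg (rpow_nonneg (hf0 x) _) (rpow_nonneg (hg0 x) _)
  rw [← ofReal_integral_eq_lintegral_ofReal (int f hf) (Eventually.of_forall hf0),
    ← ofReal_integral_eq_lintegral_ofReal (int g hg) (Eventually.of_forall hg0),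
    ENNReal.ofReal_rpow_of_nonneg (integral_nonneg hf0) hs,
    ENNReal.ofReal_rpow_of_nonneg (integral_nonneg hg0) ht,
    ← ENNReal.ofReal_mul (rpow_nonneg (integral_nonneg hf0) _)] at key
  have e : ∀ x, ENNReal.ofReal (f x) ^ s * ENNReal.ofReal (g x) ^ t
      = ENNReal.ofReal (f x ^ s * g x ^ t) := fun x => by
    rw [ENNReal.ofReal_rpow_of_nonneg (hf0 x) hs, ENNReal.ofReal_rpow_of_nonneg (hg0 x) ht,
      ENNReal.ofReal_mul (rpow_nonneg (hf0 x) _)]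
  simp only [e] at key
  rw [← ofReal_integral_eq_lintegral_ofReal (int _ hc) (Eventually.of_forall h0)] at key
  refine (ENNReal.ofReal_le_ofReal_iff ?_).1 key
  exact mul_nonneg (rpow_nonneg (integral_nonneg hf0) _) (rpow_nonneg (integral_nonneg hg0) _)

lemma holdN {f g : ℝ → ℝ} (hf : Continuous f) (hg : Continuous g) (hgp : Function.Periodic g 1)
    {r a : ℝ} (hr : 1 ≤ r) (ha0 : 0 ≤ a) (ha1 : a ≤ 1) :
    ∫ x in (0:ℝ)..1, |f x| ^ (r * (1 - a)) * |g x| ≤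
      (∫ x in (0:ℝ)..1, |f x| ^ r) ^ (1 - a) * NN a g := by
  have hr0 : 0 ≤ r := by linarith
  rcases ha0.eq_or_lt with rfl | ha
  · simp only [sub_zero, mul_one, rpow_one]
    rw [← intervalIntegral.integral_mul_const]
    refine intervalIntegral.integral_mono_on zero_le_one ?_ ?_ ?_
    · exact ((cont_rpow hf.abs hr0).mul hg.abs).intervalIntegrable _ _
    · exact ((cont_rpow hf.abs hr0).mul continuous_const).intervalIntegrable _ _
    · intro x _
      exact mul_le_mul_of_nonneg_left (abs_le_NN_zero hg hgp x) (by positivity)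
  · rw [NN_pos_eq ha hg]
    have := hold (cont_rpow hf.abs hr0) (cont_rpow (s := 1/a) hg.abs (by positivity))
      (fun x => by positivity) (fun x => by positivity) (sub_nonneg.2 ha1) ha.le (by ring)
    refine le_trans (le_of_eq ?_) this
    congr 1; ext x
    rw [← rpow_mul (abs_nonneg _), ← rpow_mul (abs_nonneg _), one_div_mul_cancel ha.ne', rpow_one]

lemma abs_arctan_le (s : ℝ) : |arctan s| ≤ 2 := by
  have h1 := arctan_lt_pi_div_two s
  have h2 := neg_pi_div_two_lt_arctan s
  have h3 := pi_le_four
  rw [abs_le]; constructor <;> linarith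

lemma core_deriv {u v z : ℝ → ℝ} (hu : ∀ x, HasDerivAt u (v x) x) (hv : ∀ x, HasDerivAt v (z x) x)
    {α γ K ε : ℝ} (hK : 0 < K) (hε : 0 < ε) (x : ℝ) :
    HasDerivAt (fun x => v x * (K * ((v x ^ 2 + ε ^ 2) ^ (γ / 2) *
        arctan (u x * (v x ^ 2 + ε ^ 2) ^ (-α / 2) / K))))
      (K * (v x ^ 2 + ε ^ 2) ^ (γ / 2) * z x *
        (arctan (u x * (v x ^ 2 + ε ^ 2) ^ (-α / 2) / K)
          + γ * (v x ^ 2 / (v x ^ 2 + ε ^ 2)) * arctan (u x * (v x ^ 2 + ε ^ 2) ^ (-α / 2) / K)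
          - α * (v x ^ 2 / (v x ^ 2 + ε ^ 2)) * ((u x * (v x ^ 2 + ε ^ 2) ^ (-α / 2) / K) /
              (1 + (u x * (v x ^ 2 + ε ^ 2) ^ (-α / 2) / K) ^ 2)))
        + v x ^ 2 * (v x ^ 2 + ε ^ 2) ^ ((γ - α) / 2) /
              (1 + (u x * (v x ^ 2 + ε ^ 2) ^ (-α / 2) / K) ^ 2)) x := by
  have hy : 0 < v x ^ 2 + ε ^ 2 := by positivity
  have hdy : HasDerivAt (fun x => v x ^ 2 + ε ^ 2) (2 * v x * z x) x := by
    simpa using ((hv x).pow 2).add_const (ε ^ 2)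
  have h1 := hdy.rpow_const (p := γ / 2) (Or.inl hy.ne')
  have h2 := hdy.rpow_const (p := -α / 2) (Or.inl hy.ne')
  have h3 := (((hu x).mul h2).div_const K).arctan
  have h4 := (hv x).mul ((h1.mul h3).const_mul K)
  refine h4.congr_deriv ?_
  simp only [Pi.mul_apply]
  rw [rpow_sub_one hy.ne', rpow_sub_one hy.ne', show (γ - α) / 2 = γ / 2 + -α / 2 by ring,
    rpow_add hy]
  generalize hY : v x ^ 2 + ε ^ 2 = y at *
  generalize y ^ (γ / 2) = g at *
  generalize y ^ (-α / 2) = l at *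
  have : (1 + (u x * l / K) ^ 2) ≠ 0 := by positivity
  generalize hS : arctan (u x * l / K) = A
  generalize hT : (1 + (u x * l / K) ^ 2) = T at *
  field_simp
  ring

set_option maxHeartbeats 1000000 in
lemma core_eps {u v z F : ℝ → ℝ} (hu : ∀ x, HasDerivAt u (v x) x)
    (hv : ∀ x, HasDerivAt v (z x) x) (hz : Continuous z)
    (hup : Function.Periodic u 1) (hvp : Function.Periodic v 1)
    {r α γ K ε : ℝ} (hr : 1 ≤ r) (hα : 0 ≤ α) (hγ : 0 ≤ γ) (hrel : γ - α = r - 2)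
    (hK : 0 < K) (hε : 0 < ε) (hF : Continuous F) (hF0 : ∀ x, 0 ≤ F x)
    (hFw : ∀ x w, 0 < w → K * w ^ α ≤ |u x| → w ^ r ≤ F x) :
    (∫ x in (0:ℝ)..1, ((v x ^ 2 + ε ^ 2) ^ (r / 2) - ε * (v x ^ 2 + ε ^ 2) ^ ((r - 1) / 2))) ≤
      ∫ x in (0:ℝ)..1, (F x + 4 * (1 + γ + α) * K * ((v x ^ 2 + ε ^ 2) ^ (γ / 2) * |z x|)) := by
  have huc : Continuous u := continuous_iff_continuousAt.2 fun x => (hu x).continuousAt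
  have hvc : Continuous v := continuous_iff_continuousAt.2 fun x => (hv x).continuousAt
  have hy : ∀ x, 0 < v x ^ 2 + ε ^ 2 := fun x => by positivity
  have hyc : Continuous (fun x => v x ^ 2 + ε ^ 2) := by fun_prop
  have hyr : ∀ s : ℝ, Continuous (fun x => (v x ^ 2 + ε ^ 2) ^ s) := fun s =>
    hyc.rpow_const (fun x => Or.inl (hy x).ne')
  have hcont : Continuous (fun x => K * (v x ^ 2 + ε ^ 2) ^ (γ / 2) * z x *
        (arctan (u x * (v x ^ 2 + ε ^ 2) ^ (-α / 2) / K)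
          + γ * (v x ^ 2 / (v x ^ 2 + ε ^ 2)) * arctan (u x * (v x ^ 2 + ε ^ 2) ^ (-α / 2) / K)
          - α * (v x ^ 2 / (v x ^ 2 + ε ^ 2)) * ((u x * (v x ^ 2 + ε ^ 2) ^ (-α / 2) / K) /
              (1 + (u x * (v x ^ 2 + ε ^ 2) ^ (-α / 2) / K) ^ 2)))
        + v x ^ 2 * (v x ^ 2 + ε ^ 2) ^ ((γ - α) / 2) /
              (1 + (u x * (v x ^ 2 + ε ^ 2) ^ (-α / 2) / K) ^ 2)) := by
    have h1 := hyr (γ / 2)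
    have h2 := hyr (-α / 2)
    have h3 := hyr ((γ - α) / 2)
    have h4 : ∀ x, 1 + (u x * (v x ^ 2 + ε ^ 2) ^ (-α / 2) / K) ^ 2 ≠ 0 := fun x => by positivity
    have h5 : Continuous fun x => arctan (u x * (v x ^ 2 + ε ^ 2) ^ (-α / 2) / K) :=
      continuous_arctan.comp (by fun_prop)
    have h6 : Continuous fun x => (u x * (v x ^ 2 + ε ^ 2) ^ (-α / 2) / K) := by fun_prop
    have h7 : Continuous fun x => v x ^ 2 / (v x ^ 2 + ε ^ 2) :=
      Continuous.div (by fun_prop) hyc (fun x => (hy x).ne')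
    have h8 : Continuous fun x => (1 + (u x * (v x ^ 2 + ε ^ 2) ^ (-α / 2) / K) ^ 2) := by
      fun_prop
    have h9 := h6.div h8 h4
    have h10 := ((hvc.pow 2).mul h3).div h8 h4
    exact (((continuous_const.mul h1).mul hz).mul ((h5.add ((continuous_const.mul h7).mul h5)).sub
      ((continuous_const.mul h7).mul h9))).add h10
  have hint := intervalIntegral.integral_eq_sub_of_hasDerivAt (a := 0) (b := 1)
    (fun x _ => core_deriv hu hv (α := α) (γ := γ) hK hε x) (hcont.intervalIntegrable _ _)
  have p1 : u 1 = u 0 := by simpa using hup 0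
  have p2 : v 1 = v 0 := by simpa using hvp 0
  rw [p1, p2, sub_self] at hint
  rw [← sub_nonneg, ← intervalIntegral.integral_sub]
  rotate_left
  · have := hyr (γ / 2)
    exact Continuous.intervalIntegrable (by fun_prop) _ _
  · exact ((hyr _).sub (continuous_const.mul (hyr _))).intervalIntegrable _ _
  have hint2 := congrArg (fun t => (-2 : ℝ) * t) hint
  simp only [mul_zero, ← intervalIntegral.integral_const_mul] at hint2
  refine le_trans (le_of_eq hint2.symm) ?_
  refine intervalIntegral.integral_mono_on zero_le_one ?_ ?_ ?_
  · exact (continuous_const.mul hcont).intervalIntegrable _ _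
  · have := hyr (γ / 2)
    have h1 := hyr (r / 2)
    have h2 := hyr ((r - 1) / 2)
    exact Continuous.intervalIntegrable (by fun_prop) _ _
  · intro x _
    have hyx := hy x
    have hw : (v x ^ 2 + ε ^ 2) ^ ((r - 1) / 2) * (v x ^ 2 + ε ^ 2) ^ ((1:ℝ) / 2)
        = (v x ^ 2 + ε ^ 2) ^ (r / 2) := by
      rw [← rpow_add hyx]; ring_nf
    have hw2 : (v x ^ 2 + ε ^ 2) ^ ((r - 2) / 2) * (v x ^ 2 + ε ^ 2) ^ ((1:ℝ) / 2)
        = (v x ^ 2 + ε ^ 2) ^ ((r - 1) / 2) := by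
      rw [← rpow_add hyx]; ring_nf
    have hw3 : (v x ^ 2 + ε ^ 2) ^ ((r - 2) / 2) * (v x ^ 2 + ε ^ 2)
        = (v x ^ 2 + ε ^ 2) ^ (r / 2) := by
      rw [← rpow_add_one hyx.ne']; ring_nf
    have hεw : ε ≤ (v x ^ 2 + ε ^ 2) ^ ((1:ℝ) / 2) := by
      rw [← sqrt_eq_rpow]; exact le_sqrt_of_sq_le (by nlinarith [sq_nonneg (v x)])
    have hvy : v x ^ 2 / (v x ^ 2 + ε ^ 2) ≤ 1 := by
      rw [div_le_one hyx]; nlinarith [sq_nonneg ε]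
    have hvy0 : 0 ≤ v x ^ 2 / (v x ^ 2 + ε ^ 2) := by positivity
    have hR : 0 < (v x ^ 2 + ε ^ 2) ^ ((r - 2) / 2) := rpow_pos_of_pos hyx _
    have hG : 0 < (v x ^ 2 + ε ^ 2) ^ (γ / 2) := rpow_pos_of_pos hyx _
    -- lower bound
    have low : (v x ^ 2 + ε ^ 2) ^ (r / 2) - ε * (v x ^ 2 + ε ^ 2) ^ ((r - 1) / 2)
        ≤ v x ^ 2 * (v x ^ 2 + ε ^ 2) ^ ((r - 2) / 2) := by
      rw [← hw2, ← hw3]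
      nlinarith [mul_le_mul_of_nonneg_left hεw (mul_pos hε hR).le]
    -- dichotomy
    have dich : v x ^ 2 * (v x ^ 2 + ε ^ 2) ^ ((r - 2) / 2) ≤ F x +
        2 * (v x ^ 2 * (v x ^ 2 + ε ^ 2) ^ ((r - 2) / 2) /
              (1 + (u x * (v x ^ 2 + ε ^ 2) ^ (-α / 2) / K) ^ 2)) := by
      rcases le_total (K * ((v x ^ 2 + ε ^ 2) ^ ((1:ℝ) / 2)) ^ α) |u x| with hc | hc
      · have := hFw x _ (rpow_pos_of_pos hyx _) hc
        rw [← rpow_mul hyx.le, show 1 / 2 * r = r / 2 by ring, ← hw3] at this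
        have h0 : 0 ≤ 2 * (v x ^ 2 * (v x ^ 2 + ε ^ 2) ^ ((r - 2) / 2) /
              (1 + (u x * (v x ^ 2 + ε ^ 2) ^ (-α / 2) / K) ^ 2)) := by positivity
        nlinarith [mul_nonneg hR.le (sq_nonneg ε)]
      · have hs : |u x * (v x ^ 2 + ε ^ 2) ^ (-α / 2) / K| ≤ 1 := by
          rw [abs_div, abs_mul, abs_of_pos hK, abs_of_pos (rpow_pos_of_pos hyx _),
            div_le_one hK, neg_div, rpow_neg hyx.le, ← div_eq_mul_inv,
            div_le_iff₀ (rpow_pos_of_pos hyx _)]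
          rwa [← rpow_mul hyx.le, show 1 / 2 * α = α / 2 by ring] at hc
        have hs2 : (u x * (v x ^ 2 + ε ^ 2) ^ (-α / 2) / K) ^ 2 ≤ 1 := by
          rw [← sq_abs]; exact pow_le_one₀ (abs_nonneg _) hs
        have : v x ^ 2 * (v x ^ 2 + ε ^ 2) ^ ((r - 2) / 2) / 2 ≤
            (v x ^ 2 * (v x ^ 2 + ε ^ 2) ^ ((r - 2) / 2) /
              (1 + (u x * (v x ^ 2 + ε ^ 2) ^ (-α / 2) / K) ^ 2)) := by
          apply div_le_div_of_nonneg_left (by positivity) (by positivity) (by linarith)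
        linarith [hF0 x]
    rw [hrel]
    set s := u x * (v x ^ 2 + ε ^ 2) ^ (-α / 2) / K with hsdef
    set t := v x ^ 2 / (v x ^ 2 + ε ^ 2)
    have hA := abs_arctan_le s
    have hB : |s / (1 + s ^ 2)| ≤ 2 := by
      rw [abs_div, abs_of_pos (a := 1 + s ^ 2) (by positivity), div_le_iff₀ (by positivity)]
      rw [← sq_abs s]; nlinarith [sq_nonneg (|s| - 1), abs_nonneg s]
    have brk : |arctan s + γ * t * arctan s - α * t * (s / (1 + s ^ 2))| ≤ 2 * (1 + γ + α) := by
      have e1 : |γ * t * arctan s| ≤ γ * 2 := by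
        rw [abs_mul, abs_of_nonneg (mul_nonneg hγ hvy0)]
        exact mul_le_mul (by nlinarith) hA (abs_nonneg _) hγ
      have e2 : |α * t * (s / (1 + s ^ 2))| ≤ α * 2 := by
        rw [abs_mul, abs_of_nonneg (mul_nonneg hα hvy0)]
        exact mul_le_mul (by nlinarith) hB (abs_nonneg _) hα
      rw [abs_le] at *
      constructor <;> linarith
    have fin : |K * (v x ^ 2 + ε ^ 2) ^ (γ / 2) * z x *
        (arctan s + γ * t * arctan s - α * t * (s / (1 + s ^ 2)))| ≤
        K * ((v x ^ 2 + ε ^ 2) ^ (γ / 2) * |z x|) * (2 * (1 + γ + α)) := by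
      rw [abs_mul, abs_mul, abs_of_pos (mul_pos hK hG), mul_assoc K]
      exact mul_le_mul_of_nonneg_left brk (by positivity)
    have fin2 := (abs_le.1 fin).1
    linarith

lemma core_zero {u v z F : ℝ → ℝ} (hu : ∀ x, HasDerivAt u (v x) x)
    (hv : ∀ x, HasDerivAt v (z x) x) (hz : Continuous z)
    (hup : Function.Periodic u 1) (hvp : Function.Periodic v 1)
    {r α γ K : ℝ} (hr : 1 ≤ r) (hα : 0 ≤ α) (hγ : 0 ≤ γ) (hrel : γ - α = r - 2)
    (hK : 0 < K) (hF : Continuous F) (hF0 : ∀ x, 0 ≤ F x)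
    (hFw : ∀ x w, 0 < w → K * w ^ α ≤ |u x| → w ^ r ≤ F x) :
    (∫ x in (0:ℝ)..1, |v x| ^ r) ≤
      (∫ x in (0:ℝ)..1, F x) + 4 * (1 + γ + α) * K * ∫ x in (0:ℝ)..1, |v x| ^ γ * |z x| := by
  have hvc : Continuous v := continuous_iff_continuousAt.2 fun x => (hv x).continuousAt
  have hy : ∀ s : ℝ, 0 ≤ s → Continuous (fun p : ℝ × ℝ => (v p.2 ^ 2 + p.1 ^ 2) ^ s) := fun s hs =>
    Continuous.rpow_const (by fun_prop) (fun _ => Or.inr hs)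
  have e : ∀ s x : ℝ, (v x ^ 2 + (0:ℝ) ^ 2) ^ (s / 2) = |v x| ^ s := fun s x => by
    rw [← sq_abs]
    simp only [ne_eq, OfNat.ofNat_ne_zero, not_false_eq_true, zero_pow, add_zero]
    rw [← rpow_natCast, ← rpow_mul (abs_nonneg _)]
    congr 1; push_cast; ring
  have c1 : Continuous (fun ε : ℝ => ∫ x in (0:ℝ)..1, ((v x ^ 2 + ε ^ 2) ^ (r / 2)
      - ε * (v x ^ 2 + ε ^ 2) ^ ((r - 1) / 2))) := by
    apply intervalIntegral.continuous_parametric_intervalIntegral_of_continuous'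
    have h1 := hy (r / 2) (by linarith)
    have h2 := hy ((r - 1) / 2) (by linarith)
    exact h1.sub (continuous_fst.mul h2)
  have c2 : Continuous (fun ε : ℝ => ∫ x in (0:ℝ)..1, (F x + 4 * (1 + γ + α) * K *
      ((v x ^ 2 + ε ^ 2) ^ (γ / 2) * |z x|))) := by
    apply intervalIntegral.continuous_parametric_intervalIntegral_of_continuous'
    have h1 := hy (γ / 2) (by linarith)
    exact (hF.comp continuous_snd).add (continuous_const.mul (h1.mul (hz.comp continuous_snd).abs))
  have t1 := (c1.tendsto 0).mono_left (nhdsWithin_le_nhds (s := Ioi 0))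
  have t2 := (c2.tendsto 0).mono_left (nhdsWithin_le_nhds (s := Ioi 0))
  have := le_of_tendsto_of_tendsto t1 t2 (by
    filter_upwards [self_mem_nhdsWithin] with ε hε
    exact core_eps hu hv hz hup hvp hr hα hγ hrel hK hε hF hF0 hFw)
  simp only [e, zero_mul, sub_zero] at this
  have hi : IntervalIntegrable (fun x => 4 * (1 + γ + α) * K * (|v x| ^ γ * |z x|)) volume 0 1 :=
    (continuous_const.mul ((cont_rpow hvc.abs hγ).mul hz.abs)).intervalIntegrable _ _
  rwa [intervalIntegral.integral_add (hF.intervalIntegrable _ _) hi,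
    intervalIntegral.integral_const_mul] at this

lemma gn2_pos {a b : ℝ} (ha0 : 0 ≤ a) (ha1 : a ≤ 1) (hb0 : 0 ≤ b) (hb1 : b ≤ 1) (hab : 0 < a + b) :
    ∃ C > 0, ∀ u v z : ℝ → ℝ, (∀ x, HasDerivAt u (v x) x) → (∀ x, HasDerivAt v (z x) x) →
      Continuous z → Function.Periodic u 1 → Function.Periodic v 1 → Function.Periodic z 1 →
      NN ((a + b) / 2) v ^ 2 ≤ C * (NN b u * NN a z) := by
  set r : ℝ := 2 / (a + b) with hrdef
  have hr : 1 ≤ r := by rw [hrdef, le_div_iff₀ hab]; linarith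
  have hα : 0 ≤ r * b := by positivity
  have hγ : 0 ≤ r * (1 - a) := mul_nonneg (by linarith) (by linarith)
  have hrab : r * (a + b) = 2 := by rw [hrdef]; field_simp
  set D : ℝ := 4 * (1 + r * (1 - a) + r * b) with hD
  have hDpos : 0 < D := by positivity
  refine ⟨4 * D, by positivity, ?_⟩
  intro u v z hu hv hz hup hvp hzp
  have huc : Continuous u := continuous_iff_continuousAt.2 fun x => (hu x).continuousAt
  have hvc : Continuous v := continuous_iff_continuousAt.2 fun x => (hv x).continuousAt
  set A := ∫ x in (0:ℝ)..1, |v x| ^ r with hA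
  have hA0 : 0 ≤ A := intervalIntegral.integral_nonneg zero_le_one fun x _ => by positivity
  have hN0 := NN_nonneg a z
  have hL : NN ((a + b) / 2) v ^ 2 = A ^ (a + b) := by
    rw [NN_pos_eq (by linarith) hvc, ← rpow_natCast, show 1 / ((a + b) / 2) = r by
      rw [hrdef]; field_simp, ← rpow_mul hA0]
    congr 1; push_cast; ring
  rw [hL]
  rcases hA0.eq_or_lt with h0 | hApos
  · rw [← h0, zero_rpow hab.ne']
    have := NN_nonneg b u
    positivity
  have key : ∀ (K : ℝ) (F : ℝ → ℝ), 0 < K → Continuous F → (∀ x, 0 ≤ F x) →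
      (∀ x w, 0 < w → K * w ^ (r * b) ≤ |u x| → w ^ r ≤ F x) →
      A ≤ (∫ x in (0:ℝ)..1, F x) + D * K * (A ^ (1 - a) * NN a z) := by
    intro K F hK hF hF0 hFw
    refine (core_zero hu hv hz hup hvp hr hα hγ (by linarith) hK hF hF0 hFw).trans ?_
    have := holdN hvc hz hzp hr ha0 ha1
    have := mul_le_mul_of_nonneg_left this (mul_pos hDpos hK).le
    linarith
  have hsplit : A = A ^ (a + b) * A ^ (1 - a - b) := by
    rw [← rpow_add hApos]; ring_nf; rw [rpow_one]
  have hpw : 0 < A ^ (1 - a - b) := rpow_pos_of_pos hApos _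
  rcases hb0.eq_or_lt with hb | hb
  · have claim : ∀ δ > 0, A ^ (a + b) ≤ 4 * D * ((NN b u + δ) * NN a z) := by
      intro δ hδ
      have hM := NN_nonneg b u
      have h := key (NN b u + δ) (fun _ => 0) (by linarith) continuous_const (fun _ => le_rfl) (by
        intro x w hw hc
        rw [← hb] at hc
        simp only [mul_zero, rpow_zero, mul_one] at hc
        have := abs_le_NN_zero huc hup x
        linarith)
      simp only [intervalIntegral.integral_zero, zero_add] at h
      have h2 : A ^ (a + b) ≤ D * ((NN b u + δ) * NN a z) := by
        refine le_of_mul_le_mul_right ?_ hpw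
        rw [← hsplit]
        refine h.trans (le_of_eq ?_)
        rw [show 1 - a - b = 1 - a by rw [← hb]; ring]; ring
      have : 0 ≤ D * ((NN b u + δ) * NN a z) := by positivity
      linarith
    have t : Tendsto (fun δ : ℝ => 4 * D * ((NN b u + δ) * NN a z)) (𝓝[>] 0)
        (𝓝 (4 * D * ((NN b u + 0) * NN a z))) :=
      (Continuous.tendsto (by fun_prop) 0).mono_left nhdsWithin_le_nhds
    rw [add_zero] at t
    exact ge_of_tendsto t (by filter_upwards [self_mem_nhdsWithin] with δ hδ using claim δ hδ)
  · rw [NN_pos_eq hb huc]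
    set Q := ∫ x in (0:ℝ)..1, |u x| ^ (1 / b) with hQ
    have hQ0 : 0 ≤ Q := intervalIntegral.integral_nonneg zero_le_one fun x _ => by positivity
    have claim : ∀ δ > 0, A ^ (a + b) ≤ 4 * D * ((Q + δ) ^ b * NN a z) := by
      intro δ hδ
      have hQd : 0 < Q + δ := by linarith
      set K : ℝ := (2 * (Q + δ) / A) ^ b with hK
      have hKpos : 0 < K := by positivity
      have hKb : K ^ (1 / b) = 2 * (Q + δ) / A := by
        rw [hK, ← rpow_mul (by positivity), mul_one_div_cancel hb.ne', rpow_one]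
      have h := key K (fun x => (K ^ (1 / b))⁻¹ * |u x| ^ (1 / b)) hKpos
        (continuous_const.mul (cont_rpow huc.abs (by positivity))) (fun x => by positivity) (by
        intro x w hw hc
        have h1 := rpow_le_rpow (z := 1 / b) (by positivity) hc (by positivity)
        rw [mul_rpow hKpos.le (by positivity), ← rpow_mul hw.le, mul_assoc r,
          mul_one_div_cancel hb.ne', mul_one] at h1
        rw [inv_mul_eq_div, le_div_iff₀ (by positivity)]
        linarith)
      rw [intervalIntegral.integral_const_mul, ← hQ, hKb] at h
      have hf : (2 * (Q + δ) / A)⁻¹ * Q ≤ A / 2 := by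
        rw [inv_div, div_mul_eq_mul_div, div_le_div_iff₀ (by positivity) (by positivity)]
        nlinarith
      have hK2 : K ≤ 2 * ((Q + δ) ^ b * A ^ (-b)) := by
        rw [hK, div_rpow (by positivity) hA0, mul_rpow (by norm_num) hQd.le, rpow_neg hA0,
          div_eq_mul_inv, mul_assoc]
        refine mul_le_mul_of_nonneg_right ?_ (by positivity)
        calc (2:ℝ) ^ b ≤ 2 ^ (1:ℝ) := rpow_le_rpow_of_exponent_le (by norm_num) hb1
          _ = 2 := rpow_one 2
      have h3 : A ≤ 2 * (D * (2 * ((Q + δ) ^ b * A ^ (-b))) * (A ^ (1 - a) * NN a z)) := by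
        have : D * K * (A ^ (1 - a) * NN a z) ≤
            D * (2 * ((Q + δ) ^ b * A ^ (-b))) * (A ^ (1 - a) * NN a z) := by gcongr
        linarith
      refine le_of_mul_le_mul_right ?_ hpw
      rw [← hsplit]
      refine h3.trans (le_of_eq ?_)
      rw [show 1 - a - b = -b + (1 - a) by ring, rpow_add hApos]; ring
    have t : Tendsto (fun δ : ℝ => 4 * D * ((Q + δ) ^ b * NN a z)) (𝓝[>] 0)
        (𝓝 (4 * D * ((Q + 0) ^ b * NN a z))) := by
      have := cont_rpow (f := fun δ : ℝ => Q + δ) (by fun_prop) hb.le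
      exact (Continuous.tendsto (by fun_prop) 0).mono_left nhdsWithin_le_nhds
    rw [add_zero] at t
    exact ge_of_tendsto t (by filter_upwards [self_mem_nhdsWithin] with δ hδ using claim δ hδ)

lemma gn2_zero {u v z : ℝ → ℝ} (hu : ∀ x, HasDerivAt u (v x) x)
    (hv : ∀ x, HasDerivAt v (z x) x) (hz : Continuous z)
    (hup : Function.Periodic u 1) (hzp : Function.Periodic z 1) :
    NN 0 v ^ 2 ≤ 8 * (NN 0 u * NN 0 z) := by
  have huc : Continuous u := continuous_iff_continuousAt.2 fun x => (hu x).continuousAt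
  have hM0 := NN_nonneg 0 u
  have hM2 := NN_nonneg 0 z
  have hx : ∀ x, |v x| ≤ √(8 * (NN 0 u * NN 0 z)) := by
    intro x
    have hq : ∀ l : ℝ, 0 ≤ NN 0 z * (l * l) + (-|v x|) * l + 2 * NN 0 u := by
      intro l
      rcases le_or_gt l 0 with hl | hl
      · have : 0 ≤ |v x| * (-l) := mul_nonneg (abs_nonneg _) (by linarith)
        have : 0 ≤ NN 0 z * (l * l) := mul_nonneg hM2 (mul_self_nonneg l)
        linarith
      · obtain ⟨ξ, hξ, hξe⟩ := exists_hasDerivAt_eq_slope u v (a := x) (b := x + l) (by linarith)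
          huc.continuousOn (fun y _ => hu y)
        obtain ⟨η, hη, hηe⟩ := exists_hasDerivAt_eq_slope v z (a := x) (b := ξ) hξ.1
          (fun y _ => (hv y).continuousAt.continuousWithinAt) (fun y _ => hv y)
        have h1 : v ξ * l = u (x + l) - u x := by
          rw [hξe, add_sub_cancel_left]; field_simp
        have h2 : z η * (ξ - x) = v ξ - v x := by
          rw [hηe]; have : ξ - x ≠ 0 := by linarith [hξ.1]
          field_simp
        have h3 : |z η * (ξ - x)| ≤ NN 0 z * l := by
          rw [abs_mul, abs_of_pos (a := ξ - x) (by linarith [hξ.1])]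
          exact mul_le_mul (abs_le_NN_zero hz hzp η) (by linarith [hξ.2]) (by linarith [hξ.1]) hM2
        have h4 := abs_le_NN_zero huc hup x
        have h5 := abs_le_NN_zero huc hup (x + l)
        have h6 : |v x| * l = |u (x + l) - u x - z η * (ξ - x) * l| := by
          rw [← abs_of_pos hl, ← abs_mul, abs_of_pos hl, h2, ← h1]; congr 1; ring
        have h7 : |z η * (ξ - x) * l| ≤ NN 0 z * l * l := by
          rw [abs_mul, abs_of_pos hl]; exact mul_le_mul_of_nonneg_right h3 hl.le
        have h8 := abs_sub (u (x + l) - u x) (z η * (ξ - x) * l)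
        have h9 := abs_sub (u (x + l)) (u x)
        linarith
    have := discrim_le_zero hq
    rw [discrim] at this
    apply abs_le_sqrt
    rw [← sq_abs]
    nlinarith
  have := NN_zero_le hx
  calc NN 0 v ^ 2 ≤ √(8 * (NN 0 u * NN 0 z)) ^ 2 := pow_le_pow_left₀ (NN_nonneg _ _) this 2
    _ = _ := sq_sqrt (by positivity)

lemma gn2 {a b : ℝ} (ha0 : 0 ≤ a) (ha1 : a ≤ 1) (hb0 : 0 ≤ b) (hb1 : b ≤ 1) :
    ∃ C > 0, ∀ u v z : ℝ → ℝ, (∀ x, HasDerivAt u (v x) x) → (∀ x, HasDerivAt v (z x) x) →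
      Continuous z → Function.Periodic u 1 → Function.Periodic v 1 → Function.Periodic z 1 →
      NN ((a + b) / 2) v ^ 2 ≤ C * (NN b u * NN a z) := by
  rcases (add_nonneg ha0 hb0).eq_or_lt with h | h
  · have ha : a = 0 := by linarith
    have hb : b = 0 := by linarith
    subst ha hb
    refine ⟨8, by norm_num, fun u v z hu hv hz hup _ hzp => ?_⟩
    simpa using gn2_zero hu hv hz hup hzp
  · exact gn2_pos ha0 ha1 hb0 hb1 h

lemma seq1 {m : ℕ} {C : ℝ} (hC : 1 ≤ C) {s : ℕ → ℝ} (hs : ∀ j, 0 ≤ s j)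
    (h : ∀ j, j + 2 ≤ m → s (j + 1) ^ 2 ≤ C * (s j * s (j + 2))) :
    ∀ j, j + 1 ≤ m → s j ^ (j + 1) ≤ C ^ (j * j) * s 0 * s (j + 1) ^ j := by
  have hC0 : 0 ≤ C := by linarith
  intro j
  induction j with
  | zero => intro _; simp
  | succ j ih =>
    intro hj
    have ih := ih (by omega)
    have h1 := h j (by omega)
    rcases (hs (j + 1)).eq_or_lt with h0 | h0
    · rw [← h0, zero_pow (by omega)]
      have := hs 0; have := hs (j + 1 + 1)
      positivity
    have h2 := pow_le_pow_left₀ (by positivity) h1 (j + 1)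
    rw [mul_pow, mul_pow] at h2
    refine le_of_mul_le_mul_right ?_ (pow_pos h0 j)
    have a0 := hs 0
    have a2 := hs (j + 2)
    calc s (j + 1) ^ (j + 1 + 1) * s (j + 1) ^ j = (s (j + 1) ^ 2) ^ (j + 1) := by ring
      _ ≤ C ^ (j + 1) * (s j ^ (j + 1) * s (j + 2) ^ (j + 1)) := h2
      _ ≤ C ^ (j + 1) * ((C ^ (j * j) * s 0 * s (j + 1) ^ j) * s (j + 2) ^ (j + 1)) := by gcongr
      _ = C ^ (j + 1 + j * j) * (s 0 * s (j + 1) ^ j * s (j + 2) ^ (j + 1)) := by ring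
      _ ≤ C ^ ((j + 1) * (j + 1)) * (s 0 * s (j + 1) ^ j * s (j + 2) ^ (j + 1)) := by
        gcongr
        nlinarith
      _ = _ := by ring

lemma seq2 (m : ℕ) {C : ℝ} (hC : 1 ≤ C) {β : ℕ} (hβ : 1 ≤ β) (k : ℕ) (hk : β + k ≤ m) :
    ∃ E ≥ (1:ℝ), ∀ s : ℕ → ℝ, (∀ j, 0 ≤ s j) →
    (∀ j, j + 2 ≤ m → s (j + 1) ^ 2 ≤ C * (s j * s (j + 2))) →
    s β ^ (β + k) ≤ E * (s 0 ^ k * s (β + k) ^ β) := by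
  have hC0 : 0 ≤ C := by linarith
  induction k with
  | zero => exact ⟨1, le_rfl, fun s _ _ => by simp⟩
  | succ k ih =>
    obtain ⟨E, hE, ih⟩ := ih (by omega)
    have hE' : 1 ≤ E ^ (β + k + 1) * C ^ ((β + k) * (β + k) * β) :=
      one_le_mul_of_one_le_of_one_le (one_le_pow₀ hE) (one_le_pow₀ hC)
    refine ⟨E ^ (β + k + 1) * C ^ ((β + k) * (β + k) * β), hE', fun s hs h => ?_⟩
    have i1 := ih s hs h
    have i2 := seq1 hC hs h (β + k) (by omega)
    have a0 := hs 0
    have a1 := hs β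
    have a2 := hs (β + k)
    have a3 := hs (β + k + 1)
    rw [← add_assoc]
    refine le_of_pow_le_pow_left₀ (n := β + k) (by omega) (by positivity) ?_
    calc (s β ^ (β + k + 1)) ^ (β + k) = (s β ^ (β + k)) ^ (β + k + 1) := by
          rw [← pow_mul, ← pow_mul, mul_comm]
      _ ≤ (E * (s 0 ^ k * s (β + k) ^ β)) ^ (β + k + 1) := by gcongr
      _ = E ^ (β + k + 1) * s 0 ^ (k * (β + k + 1)) * (s (β + k) ^ (β + k + 1)) ^ β := by ring
      _ ≤ E ^ (β + k + 1) * s 0 ^ (k * (β + k + 1)) *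
          (C ^ ((β + k) * (β + k)) * s 0 * s (β + k + 1) ^ (β + k)) ^ β := by gcongr
      _ = (E ^ (β + k + 1) * C ^ ((β + k) * (β + k) * β)) *
          (s 0 ^ (k + 1) * s (β + k + 1) ^ β) ^ (β + k) := by ring
      _ ≤ (E ^ (β + k + 1) * C ^ ((β + k) * (β + k) * β)) ^ (β + k) *
          (s 0 ^ (k + 1) * s (β + k + 1) ^ β) ^ (β + k) := by
        gcongr
        exact le_self_pow₀ hE' (by omega)
      _ = _ := by rw [← mul_pow]

lemma interp {a b θ : ℝ} (ha0 : 0 ≤ a) (hb0 : 0 ≤ b) (hθ0 : 0 < θ) (hθ1 : θ < 1)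
    {h : ℝ → ℝ} (hc : Continuous h) :
    NN (θ * a + (1 - θ) * b) h ≤ NN a h ^ θ * NN b h ^ (1 - θ) := by
  have hθ' : 0 < 1 - θ := by linarith
  have ex : ∀ t x : ℝ, 0 < t →
      (ENNReal.ofReal (t * x))⁻¹ * ENNReal.ofReal t = (ENNReal.ofReal x)⁻¹ := by
    intro t x ht
    have h1 : ENNReal.ofReal t ≠ 0 := by simpa using ht
    rw [ENNReal.ofReal_mul ht.le, ENNReal.mul_inv (Or.inl h1) (Or.inl ENNReal.ofReal_ne_top),
      mul_comm, ← mul_assoc, ENNReal.mul_inv_cancel h1 ENNReal.ofReal_ne_top, one_mul]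
  haveI : ENNReal.HolderTriple (ENNReal.ofReal (θ * a))⁻¹ (ENNReal.ofReal ((1 - θ) * b))⁻¹
      (ENNReal.ofReal (θ * a + (1 - θ) * b))⁻¹ := ⟨by
    rw [inv_inv, inv_inv, inv_inv, ENNReal.ofReal_add (by positivity) (by positivity)]⟩
  have c1 : Continuous (fun x => ‖h x‖ ^ θ) := cont_rpow hc.norm hθ0.le
  have c2 : Continuous (fun x => ‖h x‖ ^ (1 - θ)) := cont_rpow hc.norm hθ'.le
  have key := eLpNorm_smul_le_mul_eLpNorm (μ := μ₀) (p := (ENNReal.ofReal (θ * a))⁻¹)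
    (q := (ENNReal.ofReal ((1 - θ) * b))⁻¹) (r := (ENNReal.ofReal (θ * a + (1 - θ) * b))⁻¹)
    c2.aestronglyMeasurable c1.aestronglyMeasurable
  rw [eLpNorm_norm_rpow _ hθ0, eLpNorm_norm_rpow _ hθ', ex _ _ hθ0, ex _ _ hθ'] at key
  have e : eLpNorm ((fun x => ‖h x‖ ^ θ) • fun x => ‖h x‖ ^ (1 - θ))
      (ENNReal.ofReal (θ * a + (1 - θ) * b))⁻¹ μ₀ =
      eLpNorm h (ENNReal.ofReal (θ * a + (1 - θ) * b))⁻¹ μ₀ := by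
    rw [← eLpNorm_norm h]
    congr 1
    ext x
    simp only [Pi.smul_apply', smul_eq_mul]
    rw [← rpow_add_of_nonneg (norm_nonneg _) hθ0.le hθ'.le]
    simp
  rw [e] at key
  unfold NN lpNorm
  rw [ENNReal.toReal_rpow, ENNReal.toReal_rpow, ← ENNReal.toReal_mul]
  refine ENNReal.toReal_mono ?_ key
  exact ENNReal.mul_ne_top
    (ENNReal.rpow_ne_top_of_nonneg hθ0.le (memLp_of_cont hc _).2.ne)
    (ENNReal.rpow_ne_top_of_nonneg hθ'.le (memLp_of_cont hc _).2.ne)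

lemma periodic_iteratedDeriv {h : ℝ → ℝ} (hp : Function.Periodic h 1) (j : ℕ) :
    Function.Periodic (iteratedDeriv j h) 1 := by
  induction j with
  | zero => simpa using hp
  | succ j ih =>
    intro x
    rw [iteratedDeriv_succ, ← deriv_comp_add_const]
    congr 1
    ext y
    exact ih y

lemma gn_main {m β : ℕ} (hβ1 : 1 ≤ β) (hβm : β < m) {a b : ℝ}
    (ha0 : 0 ≤ a) (ha1 : a ≤ 1) (hb0 : 0 ≤ b) (hb1 : b ≤ 1) :
    ∃ C > 0, ∀ h : ℝ → ℝ, Function.Periodic h 1 → ContDiff ℝ (m : ℕ∞) h →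
      NN ((β / m : ℝ) * a + (1 - (β / m : ℝ)) * b) (iteratedDeriv β h) ≤
        C * (NN a (iteratedDeriv m h) ^ (β / m : ℝ) * NN b h ^ (1 - (β / m : ℝ))) := by
  have hm0 : (0:ℝ) < m := by exact_mod_cast (by omega : 0 < m)
  set e : ℕ → ℝ := fun j => (j / m : ℝ) * a + (1 - (j / m : ℝ)) * b with he
  have he01 : ∀ j ≤ m, 0 ≤ e j ∧ e j ≤ 1 := by
    intro j hj
    have h0 : (0:ℝ) ≤ j / m := by positivity
    have h1 : (j / m : ℝ) ≤ 1 := by rw [div_le_one hm0]; exact_mod_cast hj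
    have h2 : 0 ≤ 1 - (j / m : ℝ) := by linarith
    constructor
    · simp only [he]; positivity
    · simp only [he]; nlinarith
  have hmid : ∀ j : ℕ, (e (j + 2) + e j) / 2 = e (j + 1) := by
    intro j; simp only [he]; push_cast; field_simp; ring
  have hex : ∀ j : ℕ, ∃ C > 0, j + 2 ≤ m → ∀ u v z : ℝ → ℝ,
      (∀ x, HasDerivAt u (v x) x) → (∀ x, HasDerivAt v (z x) x) →
      Continuous z → Function.Periodic u 1 → Function.Periodic v 1 → Function.Periodic z 1 →
      NN (e (j + 1)) v ^ 2 ≤ C * (NN (e j) u * NN (e (j + 2)) z) := by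
    intro j
    by_cases hj : j + 2 ≤ m
    · obtain ⟨h1, h2⟩ := he01 (j + 2) hj
      obtain ⟨h3, h4⟩ := he01 j (by omega)
      obtain ⟨C, hC, H⟩ := gn2 h1 h2 h3 h4
      refine ⟨C, hC, fun _ => ?_⟩
      rw [hmid] at H; exact H
    · exact ⟨1, one_pos, fun h => absurd h hj⟩
  choose Cf hCf H using hex
  set C : ℝ := 1 + ∑ j ∈ Finset.range m, Cf j with hCdef
  have hsum : 0 ≤ ∑ j ∈ Finset.range m, Cf j := Finset.sum_nonneg fun j _ => (hCf j).le
  have hC1 : 1 ≤ C := by linarith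
  have hCj : ∀ j, j + 2 ≤ m → Cf j ≤ C := fun j hj => by
    have := Finset.single_le_sum (f := Cf) (fun j _ => (hCf j).le)
      (Finset.mem_range.2 (by omega : j < m))
    linarith
  obtain ⟨E, hE, hfin⟩ := seq2 m hC1 hβ1 (m - β) (by omega)
  refine ⟨E, by linarith, fun h hper hcd => ?_⟩
  have hd : ∀ j, j < m → ∀ x, HasDerivAt (iteratedDeriv j h) (iteratedDeriv (j + 1) h x) x := by
    intro j hj x
    rw [iteratedDeriv_succ]
    exact (hcd.differentiable_iteratedDeriv j (by exact_mod_cast hj) x).hasDerivAt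
  have hcont : ∀ j, j ≤ m → Continuous (iteratedDeriv j h) := fun j hj =>
    hcd.continuous_iteratedDeriv j (by exact_mod_cast hj)
  have hres := hfin (fun j => NN (e j) (iteratedDeriv j h)) (fun j => NN_nonneg _ _) (by
    intro j hj
    refine (H j hj _ _ _ (hd j (by omega)) (hd (j + 1) (by omega)) (hcont (j + 2) hj)
      (periodic_iteratedDeriv hper _) (periodic_iteratedDeriv hper _)
      (periodic_iteratedDeriv hper _)).trans ?_
    exact mul_le_mul_of_nonneg_right (hCj j hj) (mul_nonneg (NN_nonneg _ _) (NN_nonneg _ _)))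
  have hem : e m = a := by simp only [he]; field_simp; ring
  have he0 : e 0 = b := by simp [he]
  simp only [show β + (m - β) = m by omega, hem, he0, iteratedDeriv_zero] at hres
  change NN (e β) (iteratedDeriv β h) ≤ _
  set X := NN (e β) (iteratedDeriv β h)
  have hX : 0 ≤ X := NN_nonneg _ _
  have hA : 0 ≤ NN a (iteratedDeriv m h) := NN_nonneg _ _
  have hB : 0 ≤ NN b h := NN_nonneg _ _
  refine le_of_pow_le_pow_left₀ (n := m) (by omega) (by positivity) ?_
  refine hres.trans ?_
  rw [mul_pow, mul_pow, ← rpow_natCast (NN a (iteratedDeriv m h) ^ (β / m : ℝ)) m,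
    ← rpow_natCast (NN b h ^ (1 - β / m : ℝ)) m, ← rpow_mul hA, ← rpow_mul hB,
    show (β / m : ℝ) * m = (β : ℕ) by field_simp,
    show (1 - β / m : ℝ) * m = ((m - β : ℕ) : ℝ) by
      rw [Nat.cast_sub hβm.le]; field_simp, rpow_natCast, rpow_natCast, mul_comm (NN b h ^ _)]
  gcongr
  exact le_self_pow₀ hE (by omega)

lemma exists_recip {p : ℝ≥0∞} (hp : 1 ≤ p) : 0 ≤ (1 / p).toReal ∧ (1 / p).toReal ≤ 1 ∧
    (ENNReal.ofReal (1 / p).toReal)⁻¹ = p := by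
  have h1 : 1 / p ≤ 1 := by simpa using hp
  refine ⟨ENNReal.toReal_nonneg, ?_, ?_⟩
  · simpa using ENNReal.toReal_mono ENNReal.one_ne_top h1
  · rw [ENNReal.ofReal_toReal (h1.trans_lt ENNReal.one_lt_top).ne]; simp

/-- **Gagliardo–Nirenberg inequality on the circle, part b) (endpoint exponents).**
Let `m ∈ ℕ`, `β ∈ ℕ₀` with `β ≤ m−1`, let `q, r ∈ [1,∞]` and `p = 1` or `p = ∞`.
If `θ = β/m` and `β − 1/r = θ(m − 1/p) − (1−θ)/q` holds, then there is
`C = C(β,p,q,r,m) > 0` such that every `C^m` function `h` on `S¹` satisfies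
`|h|_{β,r} ≤ C |h|_{m,p}^θ |h|_q^{1−θ}`. -/
theorem gagliardo_nirenberg_b
    (m : ℕ) (hm : 1 ≤ m) (β : ℕ) (hβ : β ≤ m - 1)
    (q r : ℝ≥0∞) (hq : 1 ≤ q) (hr : 1 ≤ r)
    (p : ℝ≥0∞) (hp : p = 1 ∨ p = ⊤)
    (θ : ℝ) (hθ : θ = (β : ℝ) / (m : ℝ))
    (hθeq : (β : ℝ) - (1 / r).toReal
      = θ * ((m : ℝ) - (1 / p).toReal) - (1 - θ) * (1 / q).toReal) :
    ∃ C > 0, ∀ h : ℝ → ℝ, Function.Periodic h 1 → ContDiff ℝ (m : ℕ∞) h →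
      normKP β r h ≤ C * (normKP m p h) ^ θ * (lpNorm q h) ^ (1 - θ) := by
  have hm0 : (0:ℝ) < m := by exact_mod_cast hm
  have hp1 : 1 ≤ p := by rcases hp with rfl | rfl <;> simp
  obtain ⟨a0, a1, ae⟩ := exists_recip hp1
  obtain ⟨b0, b1, be⟩ := exists_recip hq
  obtain ⟨c0, c1, ce⟩ := exists_recip hr
  have hθm : θ * m = β := by rw [hθ]; field_simp
  have hrel : (1 / r).toReal = θ * (1 / p).toReal + (1 - θ) * (1 / q).toReal := by linarith
  rcases Nat.eq_zero_or_pos β with rfl | hβ1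
  · have hθ0 : θ = 0 := by simp [hθ]
    have hrq : r = q := by
      rw [← ce, ← be, hrel, hθ0]; simp
    refine ⟨2, by norm_num, fun h _ _ => ?_⟩
    rw [hθ0, hrq]
    simp only [normKP, iteratedDeriv_zero, rpow_zero, sub_zero, rpow_one]
    linarith
  · have hβm : β < m := by omega
    have hθ0 : 0 < θ := by
      rw [hθ]; have : (0:ℝ) < β := by exact_mod_cast hβ1
      positivity
    have hθ1 : θ < 1 := by rw [hθ, div_lt_one hm0]; exact_mod_cast hβm
    obtain ⟨C, hC, H⟩ := gn_main hβ1 hβm a0 a1 b0 b1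
    refine ⟨C + 1, by linarith, fun h hper hcd => ?_⟩
    have h1 := H h hper hcd
    have h2 := interp a0 b0 hθ0 hθ1 (h := h) hcd.continuous
    rw [← hθ] at h1
    simp only [← hrel, NN, ae, be, ce] at h1 h2
    unfold normKP
    have nq := lpNorm_nonneg' q h
    have np := lpNorm_nonneg' p h
    have np2 := lpNorm_nonneg' p (iteratedDeriv m h)
    have m1 : lpNorm p (iteratedDeriv m h) ^ θ ≤
        (lpNorm p (iteratedDeriv m h) + lpNorm p h) ^ θ :=
      rpow_le_rpow np2 (by linarith) hθ0.le
    have m2 : lpNorm p h ^ θ ≤ (lpNorm p (iteratedDeriv m h) + lpNorm p h) ^ θ :=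
      rpow_le_rpow np (by linarith) hθ0.le
    have nq' : 0 ≤ lpNorm q h ^ (1 - θ) := rpow_nonneg nq _
    have k1 := mul_le_mul_of_nonneg_left (mul_le_mul_of_nonneg_right m1 nq') hC.le
    have k2 := mul_le_mul_of_nonneg_right m2 nq'
    linarith

end BurgersTurb
end
end

section
/- Let ν ∈ (0,1] and let u : [0,∞) × S¹ → ℝ be a C^∞-smooth function (1-periodic in x) with ∫_{S¹} u(t,x) dx = 0 for all t ≥ 0, satisfying the free Burgers equation u_t + u u_x − ν u_{xx} = 0 pointwise. Then t · u_x(t,x) ≤ 1 for all t ≥ 0 and all x ∈ S¹. -/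
open MeasureTheory Real Set Filter
open scoped ENNReal Topology

noncomputable section

namespace BurgersTurb

lemma smooth_dir (F : ℝ × ℝ → ℝ) (hF : ContDiff ℝ (⊤ : ℕ∞) F) (e : ℝ × ℝ) :
    ContDiff ℝ (⊤ : ℕ∞) (fun p => fderiv ℝ F p e) := by
  have h : ContDiff ℝ (⊤ : ℕ∞) (fderiv ℝ F) := hF.fderiv_right (by simp)
  exact h.clm_apply contDiff_const

lemma hasDeriv_x (F : ℝ × ℝ → ℝ) (hF : ContDiff ℝ (⊤ : ℕ∞) F) (t x : ℝ) :
    HasDerivAt (fun y => F (t, y)) (fderiv ℝ F (t, x) (0, 1)) x := by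
  have h := (hF.differentiable (by simp) (t, x)).hasFDerivAt
  exact h.comp_hasDerivAt x ((hasDerivAt_const x t).prodMk (hasDerivAt_id x))

lemma hasDeriv_t (F : ℝ × ℝ → ℝ) (hF : ContDiff ℝ (⊤ : ℕ∞) F) (t x : ℝ) :
    HasDerivAt (fun s => F (s, x)) (fderiv ℝ F (t, x) (1, 0)) t := by
  have h := (hF.differentiable (by simp) (t, x)).hasFDerivAt
  exact h.comp_hasDerivAt t ((hasDerivAt_id t).prodMk (hasDerivAt_const t x))

lemma dir_symm (F : ℝ × ℝ → ℝ) (hF : ContDiff ℝ (⊤ : ℕ∞) F) (e e' p : ℝ × ℝ) :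
    fderiv ℝ (fun q => fderiv ℝ F q e) p e' = fderiv ℝ (fun q => fderiv ℝ F q e') p e := by
  have h : ContDiff ℝ (⊤ : ℕ∞) (fderiv ℝ F) := hF.fderiv_right (by simp)
  have hd : DifferentiableAt ℝ (fderiv ℝ F) p := h.differentiable (by simp) p
  have key : ∀ a b : ℝ × ℝ, fderiv ℝ (fun q => fderiv ℝ F q a) p b
      = fderiv ℝ (fderiv ℝ F) p b a := by
    intro a b
    rw [fderiv_clm_apply hd (differentiableAt_const a)]
    simp
  rw [key, key]
  have hs : IsSymmSndFDerivAt ℝ F p := hF.contDiffAt.isSymmSndFDerivAt (by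
    simp only [minSmoothness_of_isRCLikeNormedField]
    exact WithTop.coe_le_coe.2 (le_top : (2 : ℕ∞) ≤ ⊤))
  exact hs.eq e' e

lemma second_deriv_nonpos (f : ℝ → ℝ) (x : ℝ) (hc : ContinuousAt f x)
    (hm : IsLocalMax f x) : deriv (deriv f) x ≤ 0 := by
  by_contra hpos
  push Not at hpos
  have hmin : IsLocalMin f x := isLocalMin_of_deriv_deriv_pos hpos hm.deriv_eq_zero hc
  have he : f =ᶠ[𝓝 x] fun _ => f x := by
    filter_upwards [hm, hmin] with y h1 h2
    exact le_antisymm h1 h2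
  have h1 : deriv f =ᶠ[𝓝 x] deriv (fun _ => f x) := he.deriv
  have h2 := h1.deriv_eq
  simp at h2
  linarith

lemma deriv_nonneg_left (f : ℝ → ℝ) (a f' : ℝ) (ha : 0 < a) (hf : HasDerivAt f f' a)
    (hm : ∀ s, 0 ≤ s → s ≤ a → f s ≤ f a) : 0 ≤ f' := by
  have h := hf.hasDerivWithinAt (s := Iio a)
  rw [hasDerivWithinAt_iff_tendsto_slope' (by simp)] at h
  refine ge_of_tendsto h ?_
  have h0 : ∀ᶠ s in 𝓝[<] a, 0 < s := nhdsWithin_le_nhds (lt_mem_nhds ha)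
  filter_upwards [h0, self_mem_nhdsWithin] with s hs hsa
  have hsa : s < a := hsa
  rw [slope_def_field]
  exact div_nonneg_of_nonpos (by linarith [hm s hs.le hsa.le]) (by linarith)

/-- **Oleinik maximum principle for the free Burgers equation.**
Let `ν ∈ (0,1]` and let `u : [0,∞) × S¹ → ℝ` be a `C^∞`-smooth function
(`1`-periodic in `x`) with zero mean value in `x` for all `t ≥ 0`, satisfying
`u_t + u u_x − ν u_{xx} = 0` pointwise. Then `t · u_x(t,x) ≤ 1` for all `t ≥ 0`
and all `x`. -/
theorem oleinik_free_burgers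
    (ν : ℝ) (hν : ν ∈ Set.Ioc (0:ℝ) 1)
    (u : ℝ → ℝ → ℝ)
    (hsmooth : ContDiff ℝ (⊤ : ℕ∞) (fun p : ℝ × ℝ => u p.1 p.2))
    (hper : ∀ t x, u t (x + 1) = u t x)
    (hmean : ∀ t, 0 ≤ t → ∫ x in Set.Ioc (0:ℝ) 1, u t x = 0)
    (hpde : ∀ t, 0 ≤ t → ∀ x,
      deriv (fun s => u s x) t + u t x * deriv (u t) x - ν * deriv (deriv (u t)) x = 0) :
    ∀ t, 0 ≤ t → ∀ x, t * deriv (u t) x ≤ 1 := by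
  set F : ℝ × ℝ → ℝ := fun p => u p.1 p.2 with hFdef
  set V : ℝ × ℝ → ℝ := fun p => fderiv ℝ F p (0, 1) with hV
  set T : ℝ × ℝ → ℝ := fun p => fderiv ℝ F p (1, 0) with hT
  set W : ℝ × ℝ → ℝ := fun p => fderiv ℝ V p (0, 1) with hW
  have sV : ContDiff ℝ (⊤ : ℕ∞) V := smooth_dir F hsmooth _
  have sT : ContDiff ℝ (⊤ : ℕ∞) T := smooth_dir F hsmooth _
  have sW : ContDiff ℝ (⊤ : ℕ∞) W := smooth_dir V sV _
  have dux : ∀ t x, HasDerivAt (u t) (V (t, x)) x := fun t x => hasDeriv_x F hsmooth t x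
  have dut : ∀ t x, HasDerivAt (fun s => u s x) (T (t, x)) t :=
    fun t x => hasDeriv_t F hsmooth t x
  have dvx : ∀ t x, HasDerivAt (fun y => V (t, y)) (W (t, x)) x :=
    fun t x => hasDeriv_x V sV t x
  have eux : ∀ t, deriv (u t) = fun y => V (t, y) := fun t => funext fun x => (dux t x).deriv
  have evx : ∀ t, deriv (fun y => V (t, y)) = fun y => W (t, y) :=
    fun t => funext fun x => (dvx t x).deriv
  have pde : ∀ t, 0 ≤ t → ∀ x, T (t, x) = ν * W (t, x) - u t x * V (t, x) := by
    intro t ht x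
    have h := hpde t ht x
    rw [(dut t x).deriv, eux t, evx t] at h
    linarith
  have pde2 : ∀ t, 0 ≤ t → ∀ x, fderiv ℝ V (t, x) (1, 0)
      = ν * fderiv ℝ W (t, x) (0, 1) - (V (t, x) * V (t, x) + u t x * W (t, x)) := by
    intro t ht x
    have h1 := hasDeriv_x T sT t x
    have h2 := ((hasDeriv_x W sW t x).const_mul ν).sub ((dux t x).mul (dvx t x))
    have h3 : (fun y => T (t, y)) = (fun y => ν * W (t, y)) - (u t * fun y => V (t, y)) := by
      funext y
      simpa using pde t ht y
    rw [← h3] at h2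
    have h4 := h1.unique h2
    rw [← h4]
    exact dir_symm F hsmooth (0, 1) (1, 0) (t, x)
  have perV : ∀ t, Function.Periodic (fun y => V (t, y)) 1 := by
    intro t x
    have h1 : HasDerivAt (fun y => u t (y + 1)) (V (t, x + 1)) x :=
      (dux t (x + 1)).comp_add_const x 1
    have h2 : (fun y => u t (y + 1)) = u t := funext (hper t)
    rw [h2] at h1
    exact h1.unique (dux t x)
  intro b hb x
  rw [eux b]
  by_contra hcon
  push Not at hcon
  have cV : Continuous V := sV.continuous
  have hK : IsCompact (Icc (0:ℝ) b ×ˢ Icc (0:ℝ) 1) := isCompact_Icc.prod isCompact_Icc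
  obtain ⟨⟨t0, x0⟩, hmem, hmax⟩ := hK.exists_isMaxOn
    (f := fun p : ℝ × ℝ => p.1 * V p) ⟨(0, 0), by simp [hb]⟩
    (continuous_fst.mul cV).continuousOn
  obtain ⟨⟨ht0, htb⟩, -⟩ := hmem
  simp only at ht0 htb
  have hmax' : ∀ s, 0 ≤ s → s ≤ b → ∀ y, s * V (s, y) ≤ t0 * V (t0, x0) := by
    intro s hs hsb y
    obtain ⟨z, hz, hzy⟩ := (perV s).exists_mem_Ico₀ one_pos y
    have hzy : V (s, y) = V (s, z) := hzy
    rw [hzy]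
    exact hmax (a := (s, z)) ⟨⟨hs, hsb⟩, ⟨hz.1, hz.2.le⟩⟩
  have hbig : 1 < t0 * V (t0, x0) := lt_of_lt_of_le hcon (hmax' b hb le_rfl x)
  have htpos : 0 < t0 := by
    rcases ht0.eq_or_lt with h | h
    · rw [← h] at hbig; norm_num at hbig
    · exact h
  have hvpos : 0 < V (t0, x0) := by
    by_contra hneg
    push Not at hneg
    nlinarith
  have hloc : IsLocalMax (fun y => V (t0, y)) x0 :=
    Filter.Eventually.of_forall fun y => le_of_mul_le_mul_left (hmax' t0 ht0 htb y) htpos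
  have hW0 : W (t0, x0) = 0 := hloc.hasDerivAt_eq_zero (dvx t0 x0)
  have hWW : fderiv ℝ W (t0, x0) (0, 1) ≤ 0 := by
    have h := second_deriv_nonpos _ x0 (dvx t0 x0).continuousAt hloc
    rw [evx t0, (hasDeriv_x W sW t0 x0).deriv] at h
    exact h
  have hder := (hasDerivAt_id t0).mul (hasDeriv_t V sV t0 x0)
  have hnn := deriv_nonneg_left _ t0 _ htpos hder
    (fun s hs hst => by simpa using hmax' s hs (hst.trans htb) x0)
  simp only [id] at hnn
  rw [pde2 t0 ht0 x0, hW0] at hnn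
  have h5 : t0 * (ν * fderiv ℝ W (t0, x0) (0, 1)) ≤ 0 :=
    mul_nonpos_of_nonneg_of_nonpos ht0 (mul_nonpos_of_nonneg_of_nonpos hν.1.le hWW)
  nlinarith

end BurgersTurb
end
end
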